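/- arXiv:1011.6401 — 2 statements merged into one kernel-verified Lean document; each statement's English description precedes it below -/
import Mathlib

section
/- Consider the pp-wave metric with H = z⁻² on U = {(u,v,y,z) ∈ ℝ⁴ : z > 0}, i.e. g = −2 du dv − 2z⁻² du² + dy² + dz². Then the set of all Killing tensors of g is a real vector space of dimension exactly 16. -/
noncomputable section

/-- Points of (an open subset of) `ℝ⁴`, with coordinates `(u,v,y,z)` indexed by `0,1,2,3`. -/
abbrev Pt : Type := Fin 4 → ℝ

/-- Partial derivative of a function in the `i`-th coordinate direction. -/
def pd (i : Fin 4) (f : Pt → ℝ) (p : Pt) : ℝ :=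
  fderiv ℝ f p (Pi.single i 1)

/-- Kronecker delta `δ^i_a`. -/
def kd (i a : Fin 4) : ℝ := if i = a then 1 else 0

/-- Symmetrized product of Kronecker deltas, `δ_{(a}^i δ_{b)}^j`. -/
def sd (i j a b : Fin 4) : ℝ := (kd i a * kd j b + kd j a * kd i b) / 2

/-- Components of the pp-wave metric `g = -2 du dv - 2H du² + dy² + dz²`. -/
def ppMetric (H : Pt → ℝ) (p : Pt) (a b : Fin 4) : ℝ :=
  if a = 0 ∧ b = 0 then -2 * H p
  else if (a = 0 ∧ b = 1) ∨ (a = 1 ∧ b = 0) then -1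
  else if (a = 2 ∧ b = 2) ∨ (a = 3 ∧ b = 3) then 1
  else 0

/-- Christoffel symbols `Γ^d_{ab}` of the pp-wave metric:
`Γ^v_{uu} = H_{,u}`, `Γ^y_{uu} = Γ^v_{uy} = Γ^v_{yu} = H_{,y}`,
`Γ^z_{uu} = Γ^v_{uz} = Γ^v_{zu} = H_{,z}`, all others zero. -/
def Gamma (H : Pt → ℝ) (p : Pt) (d a b : Fin 4) : ℝ :=
  if d = 1 ∧ a = 0 ∧ b = 0 then pd 0 H p
  else if (d = 2 ∧ a = 0 ∧ b = 0) ∨ (d = 1 ∧ ((a = 0 ∧ b = 2) ∨ (a = 2 ∧ b = 0))) then pd 2 H p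
  else if (d = 3 ∧ a = 0 ∧ b = 0) ∨ (d = 1 ∧ ((a = 0 ∧ b = 3) ∨ (a = 3 ∧ b = 0))) then pd 3 H p
  else 0

/-- Covariant derivative of a covector field: `∇_a X_b = ∂_a X_b - Γ^d_{ab} X_d`. -/
def covD1 (H : Pt → ℝ) (X : Pt → Fin 4 → ℝ) (p : Pt) (a b : Fin 4) : ℝ :=
  pd a (fun q => X q b) p - ∑ d, Gamma H p d a b * X p d

/-- Covariant derivative of a 2-tensor field:
`∇_c T_{ab} = ∂_c T_{ab} - Γ^d_{ca} T_{db} - Γ^d_{cb} T_{ad}`. -/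
def covD2 (H : Pt → ℝ) (T : Pt → Fin 4 → Fin 4 → ℝ) (p : Pt) (c a b : Fin 4) : ℝ :=
  pd c (fun q => T q a b) p - ∑ d, Gamma H p d c a * T p d b
    - ∑ d, Gamma H p d c b * T p a d

/-- A Killing vector of the pp-wave metric on `U`, given by its covariant components:
a smooth covector field with `∇_{(a}X_{b)} = 0` on `U`. -/
def IsKillingVector (H : Pt → ℝ) (U : Set Pt) (X : Pt → Fin 4 → ℝ) : Prop :=
  (∀ a, ContDiffOn ℝ (⊤ : ℕ∞) (fun p => X p a) U) ∧
  ∀ p ∈ U, ∀ a b, covD1 H X p a b + covD1 H X p b a = 0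

/-- A (second order) Killing tensor of the pp-wave metric on `U`: a smooth symmetric
2-tensor field with `∇_{(c}K_{ab)} = 0` on `U`. -/
def IsKillingTensor (H : Pt → ℝ) (U : Set Pt) (K : Pt → Fin 4 → Fin 4 → ℝ) : Prop :=
  (∀ a b, ContDiffOn ℝ (⊤ : ℕ∞) (fun p => K p a b) U) ∧
  (∀ p a b, K p a b = K p b a) ∧
  ∀ p ∈ U, ∀ a b c,
    covD2 H K p c a b + covD2 H K p a b c + covD2 H K p b c a = 0

/-- A Killing tensor is reducible if (on `U`) it is a constant-coefficient linear combination
of the metric `g_{ab}` and finitely many symmetrized products `X_{(a}Y_{b)}` of Killing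
vectors `X`, `Y`. -/
def IsReducible (H : Pt → ℝ) (U : Set Pt) (K : Pt → Fin 4 → Fin 4 → ℝ) : Prop :=
  ∃ (c₀ : ℝ) (n : ℕ) (c : Fin n → ℝ) (X Y : Fin n → Pt → Fin 4 → ℝ),
    (∀ i, IsKillingVector H U (X i)) ∧ (∀ i, IsKillingVector H U (Y i)) ∧
    ∀ p ∈ U, ∀ a b, K p a b =
      c₀ * ppMetric H p a b + ∑ i, c i * ((X i p a * Y i p b + X i p b * Y i p a) / 2)


structure DR (R : Type) [CommRing R] [Algebra ℝ R] where
  D0 : Derivation ℝ R R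
  D1 : Derivation ℝ R R
  D2 : Derivation ℝ R R
  D3 : Derivation ℝ R R
  c10 : ∀ f, D1 (D0 f) = D0 (D1 f)
  c20 : ∀ f, D2 (D0 f) = D0 (D2 f)
  c30 : ∀ f, D3 (D0 f) = D0 (D3 f)
  c21 : ∀ f, D2 (D1 f) = D1 (D2 f)
  c31 : ∀ f, D3 (D1 f) = D1 (D3 f)
  c32 : ∀ f, D3 (D2 f) = D2 (D3 f)
  u : R
  y : R
  z : R
  w : R
  D0u : D0 u = 1
  D1u : D1 u = 0
  D2u : D2 u = 0
  D3u : D3 u = 0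
  D0y : D0 y = 0
  D1y : D1 y = 0
  D2y : D2 y = 1
  D3y : D3 y = 0
  D0z : D0 z = 0
  D1z : D1 z = 0
  D2z : D2 z = 0
  D3z : D3 z = 1
  D0w : D0 w = 0
  D1w : D1 w = 0
  D2w : D2 w = 0
  D3w : D3 w = -(w * w)
  zw : z * w = 1
  const : ∀ f, D0 f = 0 → D1 f = 0 → D2 f = 0 → D3 f = 0 → ∃ c : ℝ, f = algebraMap ℝ R c

attribute [simp] DR.c10 DR.c20 DR.c30 DR.c21 DR.c31 DR.c32 DR.D0u DR.D1u DR.D2u DR.D3u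
  DR.D0y DR.D1y DR.D2y DR.D3y DR.D0z DR.D1z DR.D2z DR.D3z DR.D0w DR.D1w DR.D2w DR.D3w

/-- Components of a symmetric tensor. -/
structure KT (R : Type) where
  vv : R
  vy : R
  vz : R
  uv : R
  yy : R
  yz : R
  zz : R
  uy : R
  uz : R
  uu : R

section
set_option linter.unusedSimpArgs false
variable {R : Type} [CommRing R] [Algebra ℝ R]

@[simp] theorem der_ofNat (D : Derivation ℝ R R) (n : ℕ) [n.AtLeastTwo] :
    D (ofNat(n) : R) = 0 := by
  rw [← Nat.cast_ofNat (R := R)]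
  exact D.map_natCast _

theorem ncan (n : ℕ) (hn : n ≠ 0) (x : R) (h : (n : R) * x = 0) : x = 0 := by
  have h2 : ((n : ℝ)⁻¹ * (n : ℝ)) • x = 0 := by
    rw [mul_smul, Algebra.smul_def (n : ℝ) x]
    simp [h]
  rwa [inv_mul_cancel₀ (by exact_mod_cast hn), one_smul] at h2

/-- The Killing equations in components (`w = 1/z`, `H_z = -2 w^3`). -/
structure Kil (S : DR R) (K : KT R) : Prop where
  vvv : S.D1 K.vv = 0
  vvy : S.D2 K.vv + 2 * S.D1 K.vy = 0
  vvz : S.D3 K.vv + 2 * S.D1 K.vz = 0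
  vvu : S.D0 K.vv + 2 * S.D1 K.uv = 0
  vyy : S.D1 K.yy + 2 * S.D2 K.vy = 0
  vyz : S.D1 K.yz + S.D2 K.vz + S.D3 K.vy = 0
  vzz : S.D1 K.zz + 2 * S.D3 K.vz = 0
  yyy : S.D2 K.yy = 0
  yyz : S.D3 K.yy + 2 * S.D2 K.yz = 0
  yzz : S.D2 K.zz + 2 * S.D3 K.yz = 0
  zzz : S.D3 K.zz = 0
  uvy : S.D0 K.vy + S.D1 K.uy + S.D2 K.uv = 0
  uvz : S.D0 K.vz + S.D1 K.uz + S.D3 K.uv + 4 * (S.w * S.w * S.w * K.vv) = 0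
  uyy : S.D0 K.yy + 2 * S.D2 K.uy = 0
  uyz : S.D0 K.yz + S.D2 K.uz + S.D3 K.uy + 4 * (S.w * S.w * S.w * K.vy) = 0
  uzz : S.D0 K.zz + 2 * S.D3 K.uz + 8 * (S.w * S.w * S.w * K.vz) = 0
  uuv : S.D1 K.uu + 2 * S.D0 K.uv + 4 * (S.w * S.w * S.w * K.vz) = 0
  uuy : S.D2 K.uu + 2 * S.D0 K.uy + 4 * (S.w * S.w * S.w * K.yz) = 0
  uuz : S.D3 K.uu + 2 * S.D0 K.uz + 4 * (S.w * S.w * S.w * K.zz)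
    + 8 * (S.w * S.w * S.w * K.uv) = 0
  uuu : S.D0 K.uu + 4 * (S.w * S.w * S.w * K.uz) = 0

theorem zcan (S : DR R) (x : R) (h : S.z * x = 0) : x = 0 := by
  linear_combination S.w * h - x * S.zw

theorem can (n : ℕ) (hn : n ≠ 0) {x y : R} (h : (n : R) * x = (n : R) * y) : x = y := by
  have := ncan n hn (x - y) (by linear_combination h)
  linear_combination this

/-- polynomial in z with z-constant coefficients -/
theorem sep (S : DR R) (f0 f1 f2 f3 f4 f5 f6 : R) (h0 : S.D3 f0 = 0) (h1 : S.D3 f1 = 0)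
    (h2 : S.D3 f2 = 0) (h3 : S.D3 f3 = 0) (h4 : S.D3 f4 = 0) (h5 : S.D3 f5 = 0)
    (h6 : S.D3 f6 = 0)
    (h : f0 + S.z * (f1 + S.z * (f2 + S.z * (f3 + S.z * (f4 + S.z * (f5 + S.z * f6))))) = 0) :
    f0 = 0 ∧ f1 = 0 ∧ f2 = 0 ∧ f3 = 0 ∧ f4 = 0 ∧ f5 = 0 ∧ f6 = 0 := by
  have e1 := congrArg S.D3 h
  simp [h0, h1, h2, h3, h4, h5, h6] at e1
  have e2 := congrArg S.D3 e1
  simp [h0, h1, h2, h3, h4, h5, h6] at e2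
  have e3 := congrArg S.D3 e2
  simp [h0, h1, h2, h3, h4, h5, h6] at e3
  have e4 := congrArg S.D3 e3
  simp [h0, h1, h2, h3, h4, h5, h6] at e4
  have e5 := congrArg S.D3 e4
  simp [h0, h1, h2, h3, h4, h5, h6] at e5
  have e6 := congrArg S.D3 e5
  simp [h0, h1, h2, h3, h4, h5, h6] at e6
  have g6 : f6 = 0 := by
    refine ncan 720 (by norm_num) _ ?_
    push_cast; linear_combination e6
  subst g6
  have g5 : f5 = 0 := by
    refine ncan 120 (by norm_num) _ ?_
    push_cast; linear_combination e5
  subst g5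
  have g4 : f4 = 0 := by
    refine ncan 24 (by norm_num) _ ?_
    push_cast; linear_combination e4
  subst g4
  have g3 : f3 = 0 := by
    refine ncan 6 (by norm_num) _ ?_
    push_cast; linear_combination e3
  subst g3
  have g2 : f2 = 0 := by
    refine ncan 2 (by norm_num) _ ?_
    push_cast; linear_combination e2
  subst g2
  have g1 : f1 = 0 := by linear_combination e1
  subst g1
  have g0 : f0 = 0 := by linear_combination h
  subst g0
  simp

/-- Apply a function to all components. -/
def KT.map (f : R → R) (K : KT R) : KT R :=
  ⟨f K.vv, f K.vy, f K.vz, f K.uv, f K.yy, f K.yz, f K.zz, f K.uy, f K.uz, f K.uu⟩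

theorem Kil.d1 {S : DR R} {K : KT R} (k : Kil S K) : Kil S (K.map S.D1) := by
  have h1 := congrArg S.D1 k.vvv
  have h2 := congrArg S.D1 k.vvy
  have h3 := congrArg S.D1 k.vvz
  have h4 := congrArg S.D1 k.vvu
  have h5 := congrArg S.D1 k.vyy
  have h6 := congrArg S.D1 k.vyz
  have h7 := congrArg S.D1 k.vzz
  have h8 := congrArg S.D1 k.yyy
  have h9 := congrArg S.D1 k.yyz
  have h10 := congrArg S.D1 k.yzz
  have h11 := congrArg S.D1 k.zzz
  have h12 := congrArg S.D1 k.uvy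
  have h13 := congrArg S.D1 k.uvz
  have h14 := congrArg S.D1 k.uyy
  have h15 := congrArg S.D1 k.uyz
  have h16 := congrArg S.D1 k.uzz
  have h17 := congrArg S.D1 k.uuv
  have h18 := congrArg S.D1 k.uuy
  have h19 := congrArg S.D1 k.uuz
  have h20 := congrArg S.D1 k.uuu
  simp at h1 h2 h3 h4 h5 h6 h7 h8 h9 h10 h11 h12 h13 h14 h15 h16 h17 h18 h19 h20
  constructor <;> simp [KT.map] <;> assumption

/-- Consequences of the Killing equations for `v`-independent tensors. -/
theorem lemA [IsAddTorsionFree R] (S : DR R) (K : KT R) (k : Kil S K)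
    (hvy : S.D1 K.vy = 0)
    (hvz : S.D1 K.vz = 0) (huv : S.D1 K.uv = 0) (hyy : S.D1 K.yy = 0) (hyz : S.D1 K.yz = 0)
    (hzz : S.D1 K.zz = 0) (huy : S.D1 K.uy = 0) (huz : S.D1 K.uz = 0) (huu : S.D1 K.uu = 0) :
    S.D0 K.vv = 0 ∧ S.D2 K.vv = 0 ∧ S.D3 K.vv = 0 ∧ K.vz = 0 ∧ S.D3 K.vy = 0 ∧
    S.D2 K.vy = 0 ∧ S.D0 K.uv = 0 ∧ S.D3 K.uv = - (4 * (S.w * S.w * S.w * K.vv)) ∧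
    S.D2 K.uv = - S.D0 K.vy := by
  have a0 : S.D0 K.vv = 0 := by linear_combination k.vvu - 2 * huv
  have a2 : S.D2 K.vv = 0 := by linear_combination k.vvy - 2 * hvy
  have a3 : S.D3 K.vv = 0 := by linear_combination k.vvz - 2 * hvz
  have b2 : S.D2 K.vy = 0 := by grind [k.vyy]
  have b3 : S.D3 K.vz = 0 := by grind [k.vzz]
  have e := congrArg S.D3 k.uuv
  have e' := congrArg S.D0 k.uvz
  simp [huu, huz, a0, b3] at e e'
  have A : K.vz = 0 := by
    have := sep S (6 * K.vz) 0 0 0 (S.D0 (S.D0 K.vz)) 0 0 (by simp [b3]) (by simp) (by simp)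
      (by simp) (by simp [b3]) (by simp) (by simp) (by grind [S.zw])
    grind
  have g1 := k.vyz
  have g2 := k.uuv
  have g3 := k.uvz
  have g4 := k.uvy
  simp [A, hyz, huu, huz, huy] at g1 g2 g3 g4
  refine ⟨a0, a2, a3, A, g1, b2, ?_, ?_, ?_⟩ <;> grind

theorem lemE [IsAddTorsionFree R] (S : DR R) (K : KT R) (k : Kil S K) (A1 : R)
    (hA : K.vz = S.z * A1) (A13 : S.D3 A1 = 0) (A100 : S.D0 (S.D0 A1) = 0)
    (B03 : S.D0 (S.D3 K.uv) = 0) :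
    A1 = 0 ∧ 2 * K.uz = - (S.z * S.D0 K.zz) ∧ S.D0 K.uv = 0 ∧ S.D0 (S.D0 (S.D0 K.zz)) = 0 := by
  have zw := S.zw
  obtain ⟨κ, hκ⟩ : ∃ κ, κ = 2 * K.uz - 8 * (S.w * A1) + S.z * S.D0 K.zz := ⟨_, rfl⟩
  have zzz := k.zzz
  have uzz := k.uzz
  have uuz := congrArg S.D0 k.uuz
  have uuu := congrArg S.D3 k.uuu
  rw [hA] at uzz
  simp at uuz uuu
  have κ3 : S.D3 κ = 0 := by
    rw [hκ]; simp [A13, zzz]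
    linear_combination uzz - 8 * S.w * S.w * A1 * zw
  have κ00 : S.D0 (S.D0 κ) = 2 * S.D0 (S.D0 K.uz) + S.z * S.D0 (S.D0 (S.D0 K.zz)) := by
    rw [hκ]; simp [A100]
  have e : S.D0 (S.D0 κ) - S.z * S.D0 (S.D0 (S.D0 K.zz)) + 8 * (S.w * S.w * S.w * S.D0 K.uv)
      + 6 * (S.w * S.w * S.w * S.w * κ) + 64 * (S.w * S.w * S.w * S.w * S.w * A1) = 0 := by
    linear_combination κ00 + uuz - uuu + 6 * S.w * S.w * S.w * S.w * hκ
      + 2 * S.w * S.w * S.w * uzz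
      + (6 * S.w * S.w * S.w * S.D0 K.zz - 16 * S.w ^ 5 * A1) * zw
  have := sep S (64 * A1) (6 * κ) (8 * S.D0 K.uv) 0 0 (S.D0 (S.D0 κ)) (-S.D0 (S.D0 (S.D0 K.zz)))
    (by simp [A13]) (by simp [κ3]) (by simp [B03]) (by simp) (by simp) (by simp [κ3])
    (by simp [zzz]) (by clear * - e zw; grind)
  obtain ⟨h1, h2, h3, -, -, -, h4⟩ := this
  have hA0 : A1 = 0 := by grind
  refine ⟨hA0, ?_, by clear * - h3; grind, by simpa using h4⟩
  rw [hA0] at hκ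
  have hk0 : κ = 0 := by clear * - h2; grind
  linear_combination hk0 - hκ

theorem lemF [IsAddTorsionFree R] (S : DR R) (K : KT R) (k : Kil S K)
    (hA : K.vz = 0) (C3 : S.D3 K.vy = 0) (B32 : S.D2 (S.D3 K.uv) = 0)
    (hκ : 2 * K.uz = - (S.z * S.D0 K.zz)) :
    ∃ k1, K.yz = S.z * k1 ∧ S.D3 k1 = 0 ∧ S.D2 K.zz = - (2 * k1) ∧ S.D2 K.vy = 0 ∧
      S.D0 (S.D2 k1) = 0 ∧ S.D2 K.uv + S.D0 K.vy = 0 ∧ S.D0 (S.D0 k1) = 0 := by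
  have zw := S.zw
  have zzz := k.zzz
  have yzz := k.yzz
  have yyz := k.yyz
  obtain ⟨k1, hk1⟩ : ∃ k1, k1 = S.D3 K.yz := ⟨_, rfl⟩
  obtain ⟨k0, hk0⟩ : ∃ k0, k0 = K.yz - S.z * k1 := ⟨_, rfl⟩
  have k13 : S.D3 k1 = 0 := by
    have := congrArg S.D3 yzz
    simp [zzz] at this
    rw [hk1]; clear * - this; grind
  have k03 : S.D3 k0 = 0 := by rw [hk0]; simp [k13, ← hk1]
  have hyz : K.yz = k0 + S.z * k1 := by rw [hk0]; ring
  have zz2 : S.D2 K.zz = - (2 * k1) := by linear_combination yzz + 2 * hk1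
  have uz2 : S.D2 K.uz = S.z * S.D0 k1 := by
    have := congrArg S.D2 hκ
    simp [zz2] at this
    apply can 2 (by norm_num)
    push_cast; linear_combination this
  have uyz := k.uyz
  simp [hyz, uz2] at uyz
  have uy3 : S.D3 K.uy = - (S.D0 k0 + 2 * (S.z * S.D0 k1) + 4 * (S.w * S.w * S.w * K.vy)) := by
    linear_combination uyz
  have yy3 : S.D3 K.yy = - (2 * S.D2 k0 + 2 * (S.z * S.D2 k1)) := by
    simp [hyz] at yyz
    linear_combination yyz
  have e1 := congrArg S.D3 k.uyy
  simp [uy3, yy3] at e1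
  have s1 := sep S (8 * S.D2 K.vy) 0 0 (4 * S.D0 (S.D2 k0)) (6 * S.D0 (S.D2 k1)) 0 0
    (by simp [C3]) (by simp) (by simp) (by simp [k03]) (by simp [k13]) (by simp) (by simp)
    (by clear * - e1 zw; grind)
  obtain ⟨s1, -, -, -, s2, -, -⟩ := s1
  have e2 := congrArg S.D3 k.uuy
  have uu3 : S.D3 K.uu = -(2 * S.D0 K.uz) - 4 * (S.w * S.w * S.w * K.zz)
      - 8 * (S.w * S.w * S.w * K.uv) := by linear_combination k.uuz
  simp [uy3, uu3, hyz, k03, k13, zz2, uz2] at e2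
  have s3 := sep S (12 * k0) (8 * (S.D2 K.uv + S.D0 K.vy)) 0 0 (2 * S.D0 (S.D0 k0))
    (6 * S.D0 (S.D0 k1)) 0
    (by simp [k03]) (by simp [C3, B32]) (by simp) (by simp) (by simp [k03]) (by simp [k13]) (by simp)
    (by clear * - e2 zw; grind)
  obtain ⟨s3, s4, -, -, -, s5, -⟩ := s3
  have hk00 : k0 = 0 := by clear * - s3; grind
  refine ⟨k1, by rw [hyz, hk00, zero_add], k13, zz2, ?_, ?_, ?_, ?_⟩
  · clear * - s1; grind
  · clear * - s2; grind
  · exact ncan 8 (by norm_num) _ (by exact_mod_cast s4)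
  · clear * - s5; grind
end

section
set_option linter.unusedSimpArgs false
variable {R : Type} [CommRing R] [Algebra ℝ R]
theorem lemB [IsAddTorsionFree R] (S : DR R) (K : KT R) (k : Kil S K)
    (hvy : S.D1 (S.D1 K.vy) = 0)
    (hvz : S.D1 (S.D1 K.vz) = 0) (huv : S.D1 (S.D1 K.uv) = 0) (hyy : S.D1 (S.D1 K.yy) = 0)
    (hyz : S.D1 (S.D1 K.yz) = 0)
    (hzz : S.D1 (S.D1 K.zz) = 0) (huy : S.D1 (S.D1 K.uy) = 0) (huz : S.D1 (S.D1 K.uz) = 0)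
    (huu : S.D1 (S.D1 K.uu) = 0) :
    S.D1 K.vy = 0 ∧ S.D1 K.vz = 0 ∧ S.D1 K.uv = 0 ∧ S.D1 K.yy = 0 ∧ S.D1 K.yz = 0 ∧
    S.D1 K.zz = 0 ∧ S.D1 K.uy = 0 ∧ S.D1 K.uz = 0 ∧ S.D1 K.uu = 0 := by
  have zw := S.zw
  have kL := k.d1
  obtain ⟨-, -, -, p4, p5, p6, p7, p8, p9⟩ := lemA S _ kL hvy hvz huv hyy hyz hzz huy huz huu
  have vvv := k.vvv
  have vvy := k.vvy
  have vvz := k.vvz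
  have vvu := k.vvu
  have vyy := k.vyy
  have vyz := k.vyz
  have vzz := k.vzz
  have uvy := k.uvy
  have uvz := k.uvz
  have uuv := k.uuv
  have Lyyz := kL.yyz
  have Lyzz := kL.yzz
  have Lzzz := kL.zzz
  have Luyy := kL.uyy
  have Luyz := kL.uyz
  have Luzz := kL.uzz
  have Luuy := kL.uuy
  have Luuz := kL.uuz
  have Luuu := kL.uuu
  simp only [KT.map] at *
  have p4' := p4
  clear kL
  simp only [vvv, p4] at vvz hvz Luzz
  have V3 : S.D3 K.vv = 0 := by linear_combination vvz
  -- step 1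
  have q1 : S.D0 (S.D1 K.vy) = 0 := by
    have e1 := congrArg S.D0 vvy
    have e2 := congrArg S.D2 vvu
    simp at e1 e2 p9
    grind
  have q2 : S.D2 (S.D1 K.uv) = 0 := by linear_combination p9 - q1
  simp at p5 p6 p7 p8 q1 q2
  simp [vvv] at p8
  -- step 2
  have A3 : S.D3 (S.D3 K.vz) = 0 := by
    have e1 := congrArg S.D3 vzz
    simp at e1 Lzzz
    grind
  -- step 3
  have B33 : S.D3 (S.D3 K.uv) = 12 * (S.w * S.w * S.w * S.w * K.vv) - 2 * S.D0 (S.D3 K.vz) := by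
    have e1 := congrArg S.D0 vzz
    have e2 := congrArg S.D3 uvz
    simp [V3] at e1 e2 Luzz
    clear * - e1 e2 Luzz
    grind
  -- step 4
  have V00 : S.D0 (S.D0 K.vv) = 0 := by
    have e1 := congrArg S.D0 vvu
    simp [p7] at e1
    exact e1
  obtain ⟨A1, hA1⟩ : ∃ A1, A1 = S.D3 K.vz := ⟨_, rfl⟩
  obtain ⟨A0, hA0⟩ : ∃ A0, A0 = K.vz - S.z * A1 := ⟨_, rfl⟩
  have A13 : S.D3 A1 = 0 := by rw [hA1, A3]
  have A03 : S.D3 A0 = 0 := by rw [hA0]; simp [A13, hA1]; rw [← hA1, A13]; simp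
  have hA : K.vz = A0 + S.z * A1 := by rw [hA0]; ring
  obtain ⟨g, hg⟩ : ∃ g, g = 2 * S.D0 A0 + S.D3 K.uv + 4 * (S.w * S.w * S.w * K.vv)
    + 2 * (S.z * S.D0 A1) := ⟨_, rfl⟩
  have hg3 : S.D3 g = 0 := by
    rw [hg]; simp [A03, A13, V3, B33, ← hA1]; clear * - zw; grind
  have B3 : S.D3 K.uv = g - 2 * S.D0 A0 - 4 * (S.w * S.w * S.w * K.vv) - 2 * (S.z * S.D0 A1) := by
    rw [hg]; ring
  have B00 : S.D0 (S.D0 K.uv) = - (2 * (S.w * S.w * S.w * g)) := by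
    have e1 := congrArg S.D0 uuv
    simp [hA] at e1 Luuu uvz
    apply can 2 (by norm_num)
    push_cast
    linear_combination e1 - Luuu + 4 * S.w * S.w * S.w * (uvz - B3)
  have g0 : g = 0 := by
    have e1 := congrArg S.D3 B00
    simp [B3, hg3, V00] at e1
    have := sep S (6 * g) 0 0 0 (2 * S.D0 (S.D0 (S.D0 A0)) - S.D0 (S.D0 g))
      (2 * S.D0 (S.D0 (S.D0 A1))) 0 (by simp [hg3]) (by simp) (by simp)
      (by simp) (by simp [hg3, A03]) (by simp [A13]) (by simp) (by clear * - e1 zw; grind)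
    clear * - this; grind
  subst g0
  simp at B00
  -- step 5
  have st5 : A0 = 0 ∧ S.D1 K.uv = 0 ∧ S.D0 (S.D0 A1) = 0 := by
    have e1 := congrArg S.D3 uuv
    have e2 := congrArg S.D0 uvz
    simp [hA, A03, A13, B3] at e1 e2 Luuz
    simp [hA, A03, A13] at vzz
    have e3 : 12 * (S.w * S.w * S.w * S.w * A0) - 8 * (S.w * S.w * S.w * S.D1 K.uv)
        + 6 * S.D0 (S.D0 A0) + 6 * (S.z * S.D0 (S.D0 A1)) = 0 := by
      linear_combination Luuz - e1 - 2 * e2 - 4 * S.w * S.w * S.w * vzz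
        - 8 * S.w * S.w * S.w * vvu - 12 * S.w * S.w * S.w * A1 * zw
    have := sep S (12 * A0) (-8 * S.D1 K.uv) 0 0 (6 * S.D0 (S.D0 A0)) (6 * S.D0 (S.D0 A1)) 0
      (by simp [A03]) (by simp [p8]) (by simp) (by simp) (by simp [A03]) (by simp [A13]) (by simp)
      (by clear * - e3 zw; grind)
    clear * - this; grind
  obtain ⟨rfl, c0, A100⟩ := st5
  simp only [zero_add] at hA
  simp only [map_zero, mul_zero, sub_zero, zero_sub] at B3
  -- step 6
  have yz1 : S.D1 K.yz = - (S.z * S.D2 A1) - S.D3 K.vy := by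
    simp [hA] at vyz
    linear_combination vyz
  have uy1 : S.D1 K.uy = - S.D0 K.vy - S.D2 K.uv := by linear_combination uvy
  have uz1 : S.D1 K.uz = S.z * S.D0 A1 := by
    simp [hA] at uvz
    linear_combination uvz - B3
  have zz1 : S.D1 K.zz = - (2 * A1) := by
    linear_combination vzz + 2 * hA1
  have V2 : S.D2 K.vv = - (2 * S.D1 K.vy) := by linear_combination vvy
  have V0 : S.D0 K.vv = 0 := by linear_combination vvu - 2 * c0
  have C03 : S.D0 (S.D3 K.vy) = S.z * S.D0 (S.D2 A1) - 2 * (S.w * S.w * S.w * S.D1 K.vy) := by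
    have e1 := Luyz
    rw [yz1, uz1, uy1] at e1
    simp [B3, V2] at e1
    apply can 2 (by norm_num)
    push_cast
    linear_combination - e1
  have C33 : S.D3 (S.D3 K.vy) = - (2 * S.D2 A1) := by
    have e1 := Lyzz
    rw [yz1, zz1] at e1
    simp [A13] at e1
    apply can 2 (by norm_num)
    push_cast
    linear_combination - e1
  have st6 : S.D1 K.vy = 0 ∧ S.D0 (S.D2 A1) = 0 := by
    have e1 := congrArg S.D3 C03
    simp [C33, A13, p5] at e1
    have := sep S (6 * S.D1 K.vy) 0 0 0 (3 * S.D0 (S.D2 A1)) 0 0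
      (by simp [p5]) (by simp) (by simp) (by simp) (by simp [A13]) (by simp) (by simp)
      (by clear * - e1 zw; grind)
    obtain ⟨t1, -, -, -, t2, -, -⟩ := this
    constructor
    · clear * - t1; grind
    · clear * - t2; grind
  obtain ⟨a0, A102⟩ := st6
  rw [a0, mul_zero, neg_zero] at V2
  rw [a0, A102, mul_zero, mul_zero, mul_zero, sub_zero] at C03
  -- step 7
  have uu1 : S.D1 K.uu = - (2 * S.D0 K.uv) - 4 * (S.w * S.w * S.w * (S.z * A1)) := by
    rw [← hA]; linear_combination uuv
  have C3 : S.D3 K.vy = - (2 * (S.z * S.D2 A1)) := by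
    have e1 := Luuy
    rw [uu1, uy1, yz1] at e1
    have e2 := congrArg S.D3 e1
    simp [C33, C03, B3, A13, A102, A100, V0, V2] at e1 e2
    have e3 : S.w * S.w * S.w * S.w * (12 * (S.D3 K.vy + 2 * (S.z * S.D2 A1))) = 0 := by
      clear * - e2 zw
      grind
    clear * - e3 zw
    grind
  have B03 : S.D0 (S.D3 K.uv) = 0 := by simp [B3, V0, A100]
  obtain ⟨rfl, hκ, B0, -⟩ := lemE S K k A1 hA A13 A100 B03
  simp at C3 hA zz1 uz1 yz1 B3
  have B32 : S.D2 (S.D3 K.uv) = 0 := by simp [B3, V2]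
  obtain ⟨k1, -, -, -, C2, -, hBC, -⟩ := lemF S K k hA C3 B32 hκ
  refine ⟨a0, p4', c0, ?_, ?_, zz1, ?_, uz1, ?_⟩
  · linear_combination vyy - 2 * C2
  · rw [yz1, C3]; simp
  · linear_combination uy1 - hBC
  · rw [uu1, B0]; simp
end

section
set_option linter.unusedSimpArgs false
variable {R : Type} [CommRing R] [Algebra ℝ R]

/-- Every Killing tensor is independent of `v`. -/
theorem lemC [IsAddTorsionFree R] (S : DR R) (K : KT R) (k : Kil S K) :
    S.D1 K.vy = 0 ∧ S.D1 K.vz = 0 ∧ S.D1 K.uv = 0 ∧ S.D1 K.yy = 0 ∧ S.D1 K.yz = 0 ∧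
    S.D1 K.zz = 0 ∧ S.D1 K.uy = 0 ∧ S.D1 K.uz = 0 ∧ S.D1 K.uu = 0 := by
  have two : ∀ x : R, 2 * x = 0 → x = 0 := fun x h => ncan 2 (by norm_num) x (by exact_mod_cast h)
  have k1 := k.d1
  have vvv := k.vvv
  have a1 : S.D1 (S.D1 K.vy) = 0 := by
    have := k1.vvy; simp [KT.map, vvv] at this; exact two _ this
  have a2 : S.D1 (S.D1 K.vz) = 0 := by
    have := k1.vvz; simp [KT.map, vvv] at this; exact two _ this
  have a3 : S.D1 (S.D1 K.uv) = 0 := by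
    have := k1.vvu; simp [KT.map, vvv] at this; exact two _ this
  have b1 : S.D1 (S.D1 (S.D1 K.yy)) = 0 := by
    have := k1.d1.vyy; simpa [KT.map, a1] using this
  have b2 : S.D1 (S.D1 (S.D1 K.yz)) = 0 := by
    have := k1.d1.vyz; simpa [KT.map, a1, a2] using this
  have b3 : S.D1 (S.D1 (S.D1 K.zz)) = 0 := by
    have := k1.d1.vzz; simpa [KT.map, a2] using this
  have c1 : S.D1 (S.D1 (S.D1 K.uy)) = 0 := by
    have := k1.d1.uvy; simpa [KT.map, a1, a3] using this
  have c2 : S.D1 (S.D1 (S.D1 K.uz)) = 0 := by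
    have := k1.d1.uvz; simpa [KT.map, a2, a3, vvv] using this
  have c3 : S.D1 (S.D1 (S.D1 K.uu)) = 0 := by
    have := k1.d1.uuv; simpa [KT.map, a2, a3] using this
  obtain ⟨h1, h2, h3, h4, h5, h6, h7, h8, h9⟩ := lemB S _ k1 (by simp [KT.map, a1])
    (by simp [KT.map, a2]) (by simp [KT.map, a3]) (by simp [KT.map, b1])
    (by simp [KT.map, b2]) (by simp [KT.map, b3]) (by simp [KT.map, c1])
    (by simp [KT.map, c2]) (by simp [KT.map, c3])
  exact lemB S K k h1 h2 h3 h4 h5 h6 h7 h8 h9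

theorem lemLin (S : DR R) (f : R) (h1 : S.D1 f = 0) (h2 : S.D2 f = 0) (h3 : S.D3 f = 0)
    (h : S.D0 (S.D0 f) = 0) :
    ∃ a b : ℝ, f = algebraMap ℝ R a + algebraMap ℝ R b * S.u := by
  obtain ⟨b, hb⟩ := S.const (S.D0 f) h (by simp [h1]) (by simp [h2]) (by simp [h3])
  obtain ⟨a, ha⟩ := S.const (f - algebraMap ℝ R b * S.u) (by simp [hb]) (by simp [h1])
    (by simp [h2]) (by simp [h3])
  exact ⟨a, b, by linear_combination ha⟩

theorem lemQuad (S : DR R) (f : R) (h1 : S.D1 f = 0) (h2 : S.D2 f = 0) (h3 : S.D3 f = 0)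
    (h : S.D0 (S.D0 (S.D0 f)) = 0) :
    ∃ a b c : ℝ, f = algebraMap ℝ R a + algebraMap ℝ R b * S.u
      + algebraMap ℝ R c * (S.u * S.u) := by
  obtain ⟨m, hm⟩ := S.const (S.D0 (S.D0 f)) h (by simp [h1]) (by simp [h2]) (by simp [h3])
  have hm2 : algebraMap ℝ R m = 2 * algebraMap ℝ R (m / 2) := by
    rw [← map_ofNat (algebraMap ℝ R) 2, ← map_mul]; congr 1; ring
  obtain ⟨a, b, hab⟩ := lemLin S (f - algebraMap ℝ R (m / 2) * (S.u * S.u)) (by simp [h1])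
    (by simp [h2]) (by simp [h3]) (by simp [hm, hm2]; ring)
  exact ⟨a, b, m / 2, by linear_combination hab⟩

/-- Classification of the Killing tensors. -/
theorem lemD [IsAddTorsionFree R] (S : DR R) (K : KT R) (k : Kil S K) :
    ∃ V a b c l0 l1 l2 q0 q1 q2 s0 s1 s2 t0 t1 w0 : ℝ,
      K.vv = algebraMap ℝ R V ∧ K.vz = 0 ∧
      K.vy = algebraMap ℝ R a + algebraMap ℝ R b * S.u ∧
      K.uv = 2 * (S.w * S.w * algebraMap ℝ R V) - algebraMap ℝ R b * S.y + algebraMap ℝ R c ∧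
      K.zz = algebraMap ℝ R q0 + algebraMap ℝ R q1 * S.u + algebraMap ℝ R q2 * (S.u * S.u)
        - 2 * (algebraMap ℝ R l0 * S.y) - algebraMap ℝ R l1 * (S.y * S.y)
        - 2 * (algebraMap ℝ R l2 * (S.u * S.y)) ∧
      K.yz = S.z * (algebraMap ℝ R l0 + algebraMap ℝ R l1 * S.y + algebraMap ℝ R l2 * S.u) ∧
      K.yy = algebraMap ℝ R s0 + algebraMap ℝ R s1 * S.u + algebraMap ℝ R s2 * (S.u * S.u)
        - algebraMap ℝ R l1 * (S.z * S.z) ∧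
      2 * K.uz = - (S.z * (algebraMap ℝ R q1 + 2 * (algebraMap ℝ R q2 * S.u)
        - 2 * (algebraMap ℝ R l2 * S.y))) ∧
      2 * K.uy = 4 * (S.w * S.w * (algebraMap ℝ R a + algebraMap ℝ R b * S.u))
        - 2 * (algebraMap ℝ R l2 * (S.z * S.z))
        - (algebraMap ℝ R s1 + 2 * (algebraMap ℝ R s2 * S.u)) * S.y
        + algebraMap ℝ R t0 + algebraMap ℝ R t1 * S.u ∧
      K.uu = 2 * (S.w * S.w * K.zz) + 4 * (S.w * S.w * S.w * S.w * algebraMap ℝ R V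
        + S.w * S.w * (algebraMap ℝ R c - algebraMap ℝ R b * S.y))
        + algebraMap ℝ R q2 * (S.z * S.z) + algebraMap ℝ R s2 * (S.y * S.y)
        - algebraMap ℝ R t1 * S.y + algebraMap ℝ R w0 := by
  have zw := S.zw
  obtain ⟨hvy, hvz, huv, hyy, hyz, hzz, huy, huz, huu⟩ := lemC S K k
  obtain ⟨V0, V2, V3, A, C3, C2, B0, B3, B2⟩ := lemA S K k hvy hvz huv hyy hyz hzz huy huz huu
  obtain ⟨V, hV⟩ := S.const _ V0 k.vvv V2 V3
  have C00 : S.D0 (S.D0 K.vy) = 0 := by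
    have := congrArg S.D0 B2
    simp [B0] at this
    have h2 := congrArg S.D2 B0
    simp at h2
    linear_combination this - h2
  obtain ⟨a, b, hC⟩ := lemLin S K.vy hvy C2 C3 C00
  have hb : S.D0 K.vy = algebraMap ℝ R b := by rw [hC]; simp
  obtain ⟨c, hc⟩ := S.const (K.uv - 2 * (S.w * S.w * algebraMap ℝ R V) + algebraMap ℝ R b * S.y)
    (by simp [B0]) (by simp [huv]) (by simp [B2, hb]) (by simp [B3, hV]; ring)
  have B03 : S.D0 (S.D3 K.uv) = 0 := by simp [B3, V0]
  have B32 : S.D2 (S.D3 K.uv) = 0 := by simp [B3, V2]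
  obtain ⟨-, hκ, -, zz000⟩ := lemE S K k 0 (by rw [A, mul_zero]) (map_zero _) (by rw [map_zero, map_zero]) B03
  obtain ⟨k1, hyzk, k13, zz2, -, k102, -, k100⟩ := lemF S K k A C3 B32 hκ
  have k11 : S.D1 k1 = 0 := by
    have := hyz
    rw [hyzk] at this
    simp at this
    exact zcan S _ this
  have k122 : S.D2 (S.D2 k1) = 0 := by
    have := congrArg S.D2 k.yyz
    have e := congrArg S.D3 k.yyy
    rw [hyzk] at this
    simp at this e
    rw [e, zero_add] at this
    exact zcan S _ (ncan 2 (by norm_num) _ (by exact_mod_cast this))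
  obtain ⟨l1, hl1⟩ := S.const (S.D2 k1) k102 (by rw [← S.c21, k11, map_zero]) k122 (by simp [k13])
  obtain ⟨l0, l2, hl⟩ := lemLin S (k1 - algebraMap ℝ R l1 * S.y) (by simp [k11]) (by simp [hl1])
    (by simp [k13]) (by simp [k100])
  have hk1 : k1 = algebraMap ℝ R l0 + algebraMap ℝ R l1 * S.y + algebraMap ℝ R l2 * S.u := by
    linear_combination hl
  obtain ⟨q0, q1, q2, hQ⟩ := lemQuad S (K.zz + 2 * (algebraMap ℝ R l0 * S.y)
    + algebraMap ℝ R l1 * (S.y * S.y) + 2 * (algebraMap ℝ R l2 * (S.u * S.y))) (by simp [hzz])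
    (by simp [zz2, hk1]; ring) (by simp [k.zzz]) (by simp [zz000])
  have hZ : K.zz = algebraMap ℝ R q0 + algebraMap ℝ R q1 * S.u + algebraMap ℝ R q2 * (S.u * S.u)
        - 2 * (algebraMap ℝ R l0 * S.y) - algebraMap ℝ R l1 * (S.y * S.y)
        - 2 * (algebraMap ℝ R l2 * (S.u * S.y)) := by linear_combination hQ
  have hUZ : 2 * K.uz = - (S.z * (algebraMap ℝ R q1 + 2 * (algebraMap ℝ R q2 * S.u)
        - 2 * (algebraMap ℝ R l2 * S.y))) := by
    rw [hκ, hZ]; simp; ring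
  have uz2 : S.D2 K.uz = S.z * algebraMap ℝ R l2 := by
    have := congrArg S.D2 hUZ
    simp at this
    apply can 2 (by norm_num)
    push_cast; linear_combination this
  have hYZ : K.yz = S.z * (algebraMap ℝ R l0 + algebraMap ℝ R l1 * S.y + algebraMap ℝ R l2 * S.u) := by
    rw [hyzk, hk1]
  have uy00 : S.D0 (S.D0 K.uy) = 0 := by
    have e1 := congrArg S.D0 k.uuy
    have e2 := congrArg S.D2 k.uuu
    rw [hYZ] at e1
    simp [uz2] at e1 e2
    apply can 2 (by norm_num)
    push_cast; linear_combination e1 - e2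
  have yy000 : S.D0 (S.D0 (S.D0 K.yy)) = 0 := by
    have e1 := congrArg S.D0 (congrArg S.D0 k.uyy)
    have e2 := congrArg S.D2 uy00
    simp at e1 e2
    linear_combination e1 - 2 * e2
  have yy3 : S.D3 K.yy = - (2 * (S.z * algebraMap ℝ R l1)) := by
    have := k.yyz
    rw [hYZ] at this
    simp at this
    linear_combination this
  obtain ⟨s0, s1, s2, hS⟩ := lemQuad S (K.yy + algebraMap ℝ R l1 * (S.z * S.z)) (by simp [hyy])
    (by simp [k.yyy]) (by simp [yy3]; ring) (by simp [yy000])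
  have hY : K.yy = algebraMap ℝ R s0 + algebraMap ℝ R s1 * S.u + algebraMap ℝ R s2 * (S.u * S.u)
        - algebraMap ℝ R l1 * (S.z * S.z) := by linear_combination hS
  have uy2 : 2 * S.D2 K.uy = - (algebraMap ℝ R s1 + 2 * (algebraMap ℝ R s2 * S.u)) := by
    have := k.uyy
    rw [hY] at this
    simp at this
    linear_combination this
  have uy3 : S.D3 K.uy = - (2 * (S.z * algebraMap ℝ R l2)
      + 4 * (S.w * S.w * S.w * (algebraMap ℝ R a + algebraMap ℝ R b * S.u))) := by
    have := k.uyz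
    rw [hYZ, hC, uz2] at this
    simp at this
    linear_combination this
  obtain ⟨t0, t1, hT⟩ := lemLin S (2 * K.uy
        - 4 * (S.w * S.w * (algebraMap ℝ R a + algebraMap ℝ R b * S.u))
        + 2 * (algebraMap ℝ R l2 * (S.z * S.z))
        + (algebraMap ℝ R s1 + 2 * (algebraMap ℝ R s2 * S.u)) * S.y)
    (by simp [huy]) (by simp [uy2]) (by simp [uy3]; ring) (by simp [uy00])
  have hUY : 2 * K.uy = 4 * (S.w * S.w * (algebraMap ℝ R a + algebraMap ℝ R b * S.u))
        - 2 * (algebraMap ℝ R l2 * (S.z * S.z))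
        - (algebraMap ℝ R s1 + 2 * (algebraMap ℝ R s2 * S.u)) * S.y
        + algebraMap ℝ R t0 + algebraMap ℝ R t1 * S.u := by linear_combination hT
  have hUV : K.uv = 2 * (S.w * S.w * algebraMap ℝ R V) - algebraMap ℝ R b * S.y
      + algebraMap ℝ R c := by linear_combination hc
  obtain ⟨w0, hW⟩ := S.const (K.uu - 2 * (S.w * S.w * K.zz)
        - 4 * (S.w * S.w * S.w * S.w * algebraMap ℝ R V
        + S.w * S.w * (algebraMap ℝ R c - algebraMap ℝ R b * S.y))
        - algebraMap ℝ R q2 * (S.z * S.z) - algebraMap ℝ R s2 * (S.y * S.y)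
        + algebraMap ℝ R t1 * S.y)
    (by
      have := k.uuu
      simp
      linear_combination this - 2 * S.w * S.w * S.w * hκ + 2 * S.w * S.w * S.D0 K.zz * zw)
    (by simp [huu, hzz])
    (by
      have e := k.uuy
      have e1 := congrArg S.D0 hUY
      simp [hYZ] at e e1
      simp [zz2, hk1]
      linear_combination e - e1 - 4 * S.w * S.w *
        (algebraMap ℝ R l0 + algebraMap ℝ R l1 * S.y + algebraMap ℝ R l2 * S.u) * zw)
    (by
      have e := k.uuz
      have e1 := congrArg S.D0 hUZ
      simp [hUV] at e e1
      simp [k.zzz]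
      linear_combination e - e1)
  exact ⟨V, a, b, c, l0, l1, l2, q0, q1, q2, s0, s1, s2, t0, t1, w0, hV, A, hC, hUV, hZ, hYZ, hY,
    hUZ, hUY, by linear_combination hW⟩
end

noncomputable section
open scoped ContDiff
set_option linter.unusedSimpArgs false
set_option linter.unusedVariables false

def UU : Set Pt := {p | 0 < p 3}

theorem UU_open : IsOpen UU := isOpen_lt continuous_const (continuous_apply 3)

theorem UU_pre : IsPreconnected UU := by
  have : Convex ℝ UU := by
    intro p hp q hq a b ha hb hab
    simp only [UU, Set.mem_ofPred_eq, Pi.add_apply, Pi.smul_apply, smul_eq_mul] at *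
    rcases ha.eq_or_lt with h | h
    · have : b = 1 := by linarith
      subst this; subst h; simpa using hq
    · have := mul_pos h hp
      have := mul_nonneg hb hq.le
      linarith
  exact this.isPreconnected

open Classical in
def extU (f : UU → ℝ) (p : Pt) : ℝ := if h : p ∈ UU then f ⟨p, h⟩ else 0

theorem extU_of (f : UU → ℝ) (x : UU) : extU f x = f x := by simp [extU]

theorem extU_add (f g : UU → ℝ) : extU (f + g) = extU f + extU g := by
  ext p; by_cases h : p ∈ UU <;> simp [extU, h]

theorem extU_mul (f g : UU → ℝ) : extU (f * g) = extU f * extU g := by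
  ext p; by_cases h : p ∈ UU <;> simp [extU, h]

theorem extU_res (g : Pt → ℝ) : Set.EqOn (extU fun x => g x) g UU := by
  intro p hp; simp [extU, hp]

theorem pd_congr {f g : Pt → ℝ} (h : Set.EqOn f g UU) (i : Fin 4) : Set.EqOn (pd i f) (pd i g) UU := by
  intro p hp
  have : f =ᶠ[nhds p] g := Filter.eventuallyEq_of_mem (UU_open.mem_nhds hp) h
  simp only [pd, this.fderiv_eq]

theorem pd_smooth {f : Pt → ℝ} (hf : ContDiffOn ℝ ∞ f UU) (i : Fin 4) : ContDiffOn ℝ ∞ (pd i f) UU := by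
  have := hf.fderiv_of_isOpen UU_open (m := ∞) (by simp)
  exact this.clm_apply contDiffOn_const

theorem sm_diffAt {f : Pt → ℝ} (hf : ContDiffOn ℝ ∞ f UU) {p : Pt} (hp : p ∈ UU) :
    DifferentiableAt ℝ f p :=
  (hf.contDiffAt (UU_open.mem_nhds hp)).differentiableAt (by simp)

theorem pd_comm {f : Pt → ℝ} (hf : ContDiffOn ℝ ∞ f UU) (i j : Fin 4) {p : Pt} (hp : p ∈ UU) :
    pd i (pd j f) p = pd j (pd i f) p := by
  have hc := hf.contDiffAt (UU_open.mem_nhds hp)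
  have hs := hc.isSymmSndFDerivAt (by simp only [minSmoothness_of_isRCLikeNormedField]; exact WithTop.coe_le_coe.2 (le_top : (2 : ℕ∞) ≤ ⊤))
  have hd : DifferentiableAt ℝ (fderiv ℝ f) p :=
    (hc.fderiv_right (m := ∞) (by simp)).differentiableAt (by simp)
  have key : ∀ i j, pd i (pd j f) p = fderiv ℝ (fderiv ℝ f) p (Pi.single i 1) (Pi.single j 1) := by
    intro i j
    change fderiv ℝ (fun q => fderiv ℝ f q (Pi.single j 1)) p (Pi.single i 1) = _
    rw [fderiv_clm_apply hd (differentiableAt_const _)]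
    simp
  rw [key, key]
  exact hs _ _

def RR : Subalgebra ℝ (UU → ℝ) where
  carrier := {f | ContDiffOn ℝ ∞ (extU f) UU}
  mul_mem' {f g} hf hg := by
    change ContDiffOn ℝ ∞ (extU (f * g)) UU
    rw [extU_mul]; exact ContDiffOn.mul hf hg
  add_mem' {f g} hf hg := by
    change ContDiffOn ℝ ∞ (extU (f + g)) UU
    rw [extU_add]; exact ContDiffOn.add hf hg
  algebraMap_mem' c := (contDiffOn_const (c := c)).congr (extU_res fun _ => c)

def resU (g : Pt → ℝ) (hg : ContDiffOn ℝ ∞ g UU) : RR :=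
  ⟨fun x => g x, hg.congr (extU_res g)⟩

theorem resU_apply (g : Pt → ℝ) (hg : ContDiffOn ℝ ∞ g UU) (x : UU) : (resU g hg).1 x = g x := rfl

def DD (i : Fin 4) : Derivation ℝ RR RR :=
  Derivation.mk'
    { toFun := fun f => resU (pd i (extU f.1)) (pd_smooth f.2 i)
      map_add' := by
        intro f g
        apply Subtype.ext; funext x
        have h1 := sm_diffAt f.2 x.2
        have h2 := sm_diffAt g.2 x.2
        change pd i (extU (f.1 + g.1)) x = pd i (extU f.1) x + pd i (extU g.1) x
        rw [extU_add]
        simp only [pd, fderiv_add h1 h2]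
        rfl
      map_smul' := by
        intro c f
        apply Subtype.ext; funext x
        have h1 := sm_diffAt f.2 x.2
        change pd i (extU (c • f.1)) x = c * pd i (extU f.1) x
        have : extU (c • f.1) = c • extU f.1 := by
          ext p; by_cases h : p ∈ UU <;> simp [extU, h]
        rw [this]
        simp only [pd, fderiv_const_smul h1 c]
        rfl }
    (by
      intro f g
      apply Subtype.ext; funext x
      have h1 := sm_diffAt f.2 x.2
      have h2 := sm_diffAt g.2 x.2
      change pd i (extU (f.1 * g.1)) x = f.1 x * pd i (extU g.1) x + g.1 x * pd i (extU f.1) x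
      rw [extU_mul]
      simp only [pd, fderiv_mul h1 h2, extU_of]
      rfl)

theorem DD_apply (i : Fin 4) (f : RR) (x : UU) : (DD i f).1 x = pd i (extU f.1) x := rfl

theorem DD_res (i : Fin 4) (g : Pt → ℝ) (hg : ContDiffOn ℝ ∞ g UU) (x : UU) :
    (DD i (resU g hg)).1 x = pd i g x :=
  pd_congr (extU_res g) i x.2

theorem DD_comm (i j : Fin 4) (f : RR) : DD i (DD j f) = DD j (DD i f) := by
  apply Subtype.ext; funext x
  change (DD i (resU (pd j (extU f.1)) (pd_smooth f.2 j))).1 x =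
    (DD j (resU (pd i (extU f.1)) (pd_smooth f.2 i))).1 x
  rw [DD_res, DD_res, pd_comm f.2 i j x.2]

theorem coord_smooth (j : Fin 4) : ContDiffOn ℝ ∞ (fun p : Pt => p j) UU :=
  (contDiff_apply ℝ ℝ j).contDiffOn

theorem pd_coord (i j : Fin 4) (p : Pt) : pd i (fun p : Pt => p j) p = if j = i then 1 else 0 := by
  have : HasFDerivAt (fun p : Pt => p j) (ContinuousLinearMap.proj (R := ℝ) (φ := fun _ : Fin 4 => ℝ) j) p :=
    (ContinuousLinearMap.proj (R := ℝ) (φ := fun _ : Fin 4 => ℝ) j).hasFDerivAt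
  simp [pd, this.fderiv, Pi.single_apply]

def xx (j : Fin 4) : RR := resU (fun p => p j) (coord_smooth j)

theorem DD_xx (i j : Fin 4) : DD i (xx j) = if j = i then 1 else 0 := by
  apply Subtype.ext; funext x
  rw [xx, DD_res, pd_coord]
  split_ifs <;> rfl

theorem inv_smooth : ContDiffOn ℝ ∞ (fun p : Pt => (p 3)⁻¹) UU :=
  (coord_smooth 3).inv fun p hp => (ne_of_gt hp)

def wI : RR := resU (fun p => (p 3)⁻¹) inv_smooth

theorem xw : xx 3 * wI = 1 := by
  apply Subtype.ext; funext x
  have h : (x.1 3) ≠ 0 := ne_of_gt x.2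
  change x.1 3 * (x.1 3)⁻¹ = 1
  exact mul_inv_cancel₀ h

theorem DD_wI (i : Fin 4) : DD i wI = - (DD i (xx 3) * (wI * wI)) := by
  have h := congrArg (DD i) xw
  simp only [Derivation.leibniz, Derivation.map_one_eq_zero, smul_eq_mul] at h
  linear_combination wI * h - DD i wI * xw

instance : IsAddTorsionFree RR where
  nsmul_right_injective n hn f g h := by
    apply Subtype.ext; funext x
    have := congrArg (fun k : RR => k.1 x) h
    have h2 : (n : ℝ) * f.1 x = n * g.1 x := by simpa [nsmul_eq_mul] using this
    exact mul_left_cancel₀ (by exact_mod_cast hn) h2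

def SS : DR RR where
  D0 := DD 0
  D1 := DD 1
  D2 := DD 2
  D3 := DD 3
  c10 := DD_comm _ _
  c20 := DD_comm _ _
  c30 := DD_comm _ _
  c21 := DD_comm _ _
  c31 := DD_comm _ _
  c32 := DD_comm _ _
  u := xx 0
  y := xx 2
  z := xx 3
  w := wI
  D0u := by rw [DD_xx]; simp
  D1u := by rw [DD_xx]; simp
  D2u := by rw [DD_xx]; simp
  D3u := by rw [DD_xx]; simp
  D0y := by rw [DD_xx]; simp
  D1y := by rw [DD_xx]; simp
  D2y := by rw [DD_xx]; simp
  D3y := by rw [DD_xx]; simp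
  D0z := by rw [DD_xx]; simp
  D1z := by rw [DD_xx]; simp
  D2z := by rw [DD_xx]; simp
  D3z := by rw [DD_xx]; simp
  D0w := by rw [DD_wI, DD_xx]; simp
  D1w := by rw [DD_wI, DD_xx]; simp
  D2w := by rw [DD_wI, DD_xx]; simp
  D3w := by rw [DD_wI, DD_xx]; simp
  zw := xw
  const := by
    intro f h0 h1 h2 h3
    have hz : Set.EqOn (fderiv ℝ (extU f.1)) 0 UU := by
      intro p hp
      have e : ∀ i, pd i (extU f.1) p = 0 := by
        have key : ∀ i, DD i f = 0 → pd i (extU f.1) p = 0 := by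
          intro i h
          exact congrArg (fun k : RR => k.1 ⟨p, hp⟩) h
        intro i
        fin_cases i
        · exact key _ h0
        · exact key _ h1
        · exact key _ h2
        · exact key _ h3
      apply ContinuousLinearMap.coe_injective
      apply LinearMap.pi_ext'
      intro i
      ext
      simpa [pd] using e i
    have hd : DifferentiableOn ℝ (extU f.1) UU := fun p hp =>
      (sm_diffAt f.2 hp).differentiableWithinAt
    have hb : (fun _ => 1 : Pt) ∈ UU := by simp [UU]
    refine ⟨f.1 ⟨fun _ => 1, hb⟩, ?_⟩
    apply Subtype.ext; funext x
    have := UU_open.is_const_of_fderiv_eq_zero UU_pre hd hz x.2 hb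
    rw [extU_of, ← extU_of f.1 ⟨_, hb⟩] at *
    exact this
end

noncomputable section
open scoped ContDiff
set_option linter.unusedSimpArgs false
set_option linter.unusedVariables false

def HH : Pt → ℝ := fun p => ((p 3) ^ 2)⁻¹

theorem pd_HH (i : Fin 4) {p : Pt} (hp : p ∈ UU) :
    pd i HH p = if i = 3 then - (2 * ((p 3)⁻¹ * (p 3)⁻¹ * (p 3)⁻¹)) else 0 := by
  have h0 : p 3 ≠ 0 := ne_of_gt hp
  have e : HH = fun q : Pt => (q 3)⁻¹ * (q 3)⁻¹ := by
    funext q; simp [HH, pow_two]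
  have h1 := DD_res i _ (inv_smooth.mul inv_smooth) ⟨p, hp⟩
  have h2 : resU _ (inv_smooth.mul inv_smooth) = wI * wI := rfl
  change _ = pd i (fun q : Pt => (q 3)⁻¹ * (q 3)⁻¹) p at h1
  rw [e, ← h1, h2]
  simp only [Derivation.leibniz, DD_wI, DD_xx, smul_eq_mul]
  by_cases hi : i = 3
  · subst hi
    simp only [if_true]
    change (p 3)⁻¹ * (-(1 * ((p 3)⁻¹ * (p 3)⁻¹))) + (p 3)⁻¹ * (-(1 * ((p 3)⁻¹ * (p 3)⁻¹))) = _
    ring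
  · rw [if_neg (Ne.symm hi), if_neg hi]
    simp

/-- The ring-valued components of a smooth tensor field. -/
def toKT (K : Pt → Fin 4 → Fin 4 → ℝ) (hK : ∀ a b, ContDiffOn ℝ ∞ (fun p => K p a b) UU) : KT RR where
  vv := resU _ (hK 1 1)
  vy := resU _ (hK 1 2)
  vz := resU _ (hK 1 3)
  uv := resU _ (hK 0 1)
  yy := resU _ (hK 2 2)
  yz := resU _ (hK 2 3)
  zz := resU _ (hK 3 3)
  uy := resU _ (hK 0 2)
  uz := resU _ (hK 0 3)
  uu := resU _ (hK 0 0)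

theorem RR_ext {f g : RR} (h : ∀ x, f.1 x = g.1 x) : f = g := Subtype.ext (funext h)

theorem r_add (f g : RR) (x : UU) : (f + g).1 x = f.1 x + g.1 x := rfl
theorem r_sub (f g : RR) (x : UU) : (f - g).1 x = f.1 x - g.1 x := rfl
theorem r_neg (f : RR) (x : UU) : (-f).1 x = -f.1 x := rfl
theorem r_mul (f g : RR) (x : UU) : (f * g).1 x = f.1 x * g.1 x := rfl
theorem r_zero (x : UU) : (0 : RR).1 x = 0 := rfl
theorem r_two (x : UU) : (2 : RR).1 x = 2 := rfl
theorem r_four (x : UU) : (4 : RR).1 x = 4 := rfl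
theorem r_eight (x : UU) : (8 : RR).1 x = 8 := rfl
theorem r_alg (c : ℝ) (x : UU) : (algebraMap ℝ RR c).1 x = c := rfl
theorem r_w (x : UU) : SS.w.1 x = (x.1 3)⁻¹ := rfl
theorem r_z (x : UU) : SS.z.1 x = x.1 3 := rfl
theorem r_y (x : UU) : SS.y.1 x = x.1 2 := rfl
theorem r_u (x : UU) : SS.u.1 x = x.1 0 := rfl

theorem r_D0 (g : Pt → ℝ) (hg : ContDiffOn ℝ ∞ g UU) (x : UU) :
    (SS.D0 (resU g hg)).1 x = pd 0 g x := DD_res _ _ _ _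
theorem r_D1 (g : Pt → ℝ) (hg : ContDiffOn ℝ ∞ g UU) (x : UU) :
    (SS.D1 (resU g hg)).1 x = pd 1 g x := DD_res _ _ _ _
theorem r_D2 (g : Pt → ℝ) (hg : ContDiffOn ℝ ∞ g UU) (x : UU) :
    (SS.D2 (resU g hg)).1 x = pd 2 g x := DD_res _ _ _ _
theorem r_D3 (g : Pt → ℝ) (hg : ContDiffOn ℝ ∞ g UU) (x : UU) :
    (SS.D3 (resU g hg)).1 x = pd 3 g x := DD_res _ _ _ _

theorem killing_to (K : Pt → Fin 4 → Fin 4 → ℝ) (h : IsKillingTensor HH UU K) :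
    Kil SS (toKT K h.1) := by
  obtain ⟨hs, hsym, hk⟩ := h
  have g0 : ∀ x : UU, pd 0 HH x = 0 := fun x => by rw [pd_HH _ x.2]; simp
  have g2 : ∀ x : UU, pd 2 HH x = 0 := fun x => by rw [pd_HH _ x.2]; simp
  have g3 : ∀ x : UU, pd 3 HH x = - (2 * ((x.1 3)⁻¹ * (x.1 3)⁻¹ * (x.1 3)⁻¹)) := fun x => by
    rw [pd_HH _ x.2]; simp
  have s10 : ∀ p, K p 1 0 = K p 0 1 := fun p => hsym p 1 0
  have s20 : ∀ p, K p 2 0 = K p 0 2 := fun p => hsym p 2 0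
  have s30 : ∀ p, K p 3 0 = K p 0 3 := fun p => hsym p 3 0
  have s21 : ∀ p, K p 2 1 = K p 1 2 := fun p => hsym p 2 1
  have s31 : ∀ p, K p 3 1 = K p 1 3 := fun p => hsym p 3 1
  have s32 : ∀ p, K p 3 2 = K p 2 3 := fun p => hsym p 3 2
  have key : ∀ (x : UU) a b c, covD2 HH K x c a b + covD2 HH K x a b c + covD2 HH K x b c a = 0 :=
    fun x => hk x x.2
  simp only [covD2, Gamma, Fin.sum_univ_four] at key
  constructor <;> apply RR_ext <;> intro x <;>
    simp only [toKT, r_add, r_mul, r_zero, r_two, r_four, r_eight, r_w, r_D0, r_D1, r_D2, r_D3,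
      resU_apply]
  · have := key x 1 1 1; simp [s10, s20, s30, s21, s31, s32, g0, g2, g3] at this; linarith
  · have := key x 1 1 2; simp [s10, s20, s30, s21, s31, s32, g0, g2, g3] at this; linarith
  · have := key x 1 1 3; simp [s10, s20, s30, s21, s31, s32, g0, g2, g3] at this; linarith
  · have := key x 1 1 0; simp [s10, s20, s30, s21, s31, s32, g0, g2, g3] at this; linarith
  · have := key x 1 2 2; simp [s10, s20, s30, s21, s31, s32, g0, g2, g3] at this; linarith
  · have := key x 1 2 3; simp [s10, s20, s30, s21, s31, s32, g0, g2, g3] at this; linarith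
  · have := key x 1 3 3; simp [s10, s20, s30, s21, s31, s32, g0, g2, g3] at this; linarith
  · have := key x 2 2 2; simp [s10, s20, s30, s21, s31, s32, g0, g2, g3] at this; linarith
  · have := key x 2 2 3; simp [s10, s20, s30, s21, s31, s32, g0, g2, g3] at this; linarith
  · have := key x 2 3 3; simp [s10, s20, s30, s21, s31, s32, g0, g2, g3] at this; linarith
  · have := key x 3 3 3; simp [s10, s20, s30, s21, s31, s32, g0, g2, g3] at this; linarith
  · have := key x 0 1 2; simp [s10, s20, s30, s21, s31, s32, g0, g2, g3] at this; linarith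
  · have := key x 0 1 3; simp [s10, s20, s30, s21, s31, s32, g0, g2, g3] at this; linarith
  · have := key x 0 2 2; simp [s10, s20, s30, s21, s31, s32, g0, g2, g3] at this; linarith
  · have := key x 0 2 3; simp [s10, s20, s30, s21, s31, s32, g0, g2, g3] at this; linarith
  · have := key x 0 3 3; simp [s10, s20, s30, s21, s31, s32, g0, g2, g3] at this; linarith
  · have := key x 0 0 1; simp [s10, s20, s30, s21, s31, s32, g0, g2, g3] at this; linarith
  · have := key x 0 0 2; simp [s10, s20, s30, s21, s31, s32, g0, g2, g3] at this; linarith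
  · have := key x 0 0 3; simp [s10, s20, s30, s21, s31, s32, g0, g2, g3] at this; linarith
  · have := key x 0 0 0; simp [s10, s20, s30, s21, s31, s32, g0, g2, g3] at this; linarith

set_option maxHeartbeats 2000000 in
theorem killing_of (K : Pt → Fin 4 → Fin 4 → ℝ)
    (hs : ∀ a b, ContDiffOn ℝ ∞ (fun p => K p a b) UU)
    (hsym : ∀ p a b, K p a b = K p b a) (k : Kil SS (toKT K hs)) : IsKillingTensor HH UU K := by
  refine ⟨hs, hsym, ?_⟩
  intro p hp
  have g0 : pd 0 HH p = 0 := by rw [pd_HH _ hp]; simp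
  have g2 : pd 2 HH p = 0 := by rw [pd_HH _ hp]; simp
  have g3 : pd 3 HH p = - (2 * ((p 3)⁻¹ * (p 3)⁻¹ * (p 3)⁻¹)) := by
    rw [pd_HH _ hp]; simp
  have s10 : ∀ p, K p 1 0 = K p 0 1 := fun p => hsym p 1 0
  have s20 : ∀ p, K p 2 0 = K p 0 2 := fun p => hsym p 2 0
  have s30 : ∀ p, K p 3 0 = K p 0 3 := fun p => hsym p 3 0
  have s21 : ∀ p, K p 2 1 = K p 1 2 := fun p => hsym p 2 1
  have s31 : ∀ p, K p 3 1 = K p 1 3 := fun p => hsym p 3 1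
  have s32 : ∀ p, K p 3 2 = K p 2 3 := fun p => hsym p 3 2
  obtain ⟨h1, h2, h3, h4, h5, h6, h7, h8, h9, h10, h11, h12, h13, h14, h15, h16, h17, h18,
    h19, h20⟩ := k
  have ev : ∀ {f : RR}, f = 0 → f.1 ⟨p, hp⟩ = 0 := fun h => by rw [h]; rfl
  replace h1 := ev h1
  replace h2 := ev h2
  replace h3 := ev h3
  replace h4 := ev h4
  replace h5 := ev h5
  replace h6 := ev h6
  replace h7 := ev h7
  replace h8 := ev h8
  replace h9 := ev h9
  replace h10 := ev h10
  replace h11 := ev h11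
  replace h12 := ev h12
  replace h13 := ev h13
  replace h14 := ev h14
  replace h15 := ev h15
  replace h16 := ev h16
  replace h17 := ev h17
  replace h18 := ev h18
  replace h19 := ev h19
  replace h20 := ev h20
  simp only [toKT, r_add, r_mul, r_zero, r_two, r_four, r_eight, r_w, r_D0, r_D1, r_D2, r_D3,
      resU_apply] at h1 h2 h3 h4 h5 h6 h7 h8 h9 h10 h11 h12 h13 h14 h15 h16 h17 h18 h19 h20
  clear ev hs
  intro a b c
  fin_cases a <;> fin_cases b <;> fin_cases c <;>
    simp [covD2, Gamma, Fin.sum_univ_four, s10, s20, s30, s21, s31, s32, g0, g2, g3] <;> linarith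
end

noncomputable section
open scoped ContDiff
set_option linter.unusedSimpArgs false

/-- Ring-valued components of the general Killing tensor. -/
def genKT {R : Type} [CommRing R] [Algebra ℝ R] (S : DR R) (c : Fin 16 → R) : KT R where
  vv := c 0
  vy := c 1 + c 2 * S.u
  vz := 0
  uv := 2 * (S.w * S.w * c 0) - c 2 * S.y + c 3
  yy := c 10 + 2 * (c 11 * S.u) + c 12 * (S.u * S.u) - c 5 * (S.z * S.z)
  yz := S.z * (c 4 + c 5 * S.y + c 6 * S.u)
  zz := c 7 + 2 * (c 8 * S.u) + c 9 * (S.u * S.u) - 2 * (c 4 * S.y) - c 5 * (S.y * S.y)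
        - 2 * (c 6 * (S.u * S.y))
  uy := 2 * (S.w * S.w * (c 1 + c 2 * S.u)) - c 6 * (S.z * S.z) - (c 11 + c 12 * S.u) * S.y
        + c 13 + c 14 * S.u
  uz := - (S.z * (c 8 + c 9 * S.u - c 6 * S.y))
  uu := 2 * (S.w * S.w * (c 7 + 2 * (c 8 * S.u) + c 9 * (S.u * S.u) - 2 * (c 4 * S.y)
        - c 5 * (S.y * S.y) - 2 * (c 6 * (S.u * S.y))))
        + 4 * (S.w * S.w * S.w * S.w * c 0 + S.w * S.w * (c 3 - c 2 * S.y))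
        + c 9 * (S.z * S.z) + c 12 * (S.y * S.y) - 2 * (c 14 * S.y) + c 15

theorem genKT_kil {R : Type} [CommRing R] [Algebra ℝ R] (S : DR R) (c : Fin 16 → ℝ) :
    Kil S (genKT S fun i => algebraMap ℝ R (c i)) := by
  have zw := S.zw
  constructor <;> simp [genKT]
  case uuy =>
    linear_combination 4 * S.w * S.w * (algebraMap ℝ R (c 4) + algebraMap ℝ R (c 5) * S.y
      + algebraMap ℝ R (c 6) * S.u) * zw
  case uuu =>
    linear_combination - 4 * S.w * S.w * (algebraMap ℝ R (c 8) + algebraMap ℝ R (c 9) * S.u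
      - algebraMap ℝ R (c 6) * S.y) * zw
  all_goals ring

/-- The general Killing tensor. -/
def TT (c : Fin 16 → ℝ) (p : Pt) (a b : Fin 4) : ℝ :=
  let u := p 0
  let y := p 2
  let z := p 3
  let w := (p 3)⁻¹
  let vv := c 0
  let vy := c 1 + c 2 * u
  let uv := 2 * (w * w * c 0) - c 2 * y + c 3
  let yy := c 10 + 2 * (c 11 * u) + c 12 * (u * u) - c 5 * (z * z)
  let yz := z * (c 4 + c 5 * y + c 6 * u)
  let zz := c 7 + 2 * (c 8 * u) + c 9 * (u * u) - 2 * (c 4 * y) - c 5 * (y * y)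
        - 2 * (c 6 * (u * y))
  let uy := 2 * (w * w * (c 1 + c 2 * u)) - c 6 * (z * z) - (c 11 + c 12 * u) * y
        + c 13 + c 14 * u
  let uz := - (z * (c 8 + c 9 * u - c 6 * y))
  let uu := 2 * (w * w * (c 7 + 2 * (c 8 * u) + c 9 * (u * u) - 2 * (c 4 * y)
        - c 5 * (y * y) - 2 * (c 6 * (u * y))))
        + 4 * (w * w * w * w * c 0 + w * w * (c 3 - c 2 * y))
        + c 9 * (z * z) + c 12 * (y * y) - 2 * (c 14 * y) + c 15
  (![![uu, uv, uy, uz], ![uv, vv, vy, 0], ![uy, vy, yy, yz], ![uz, 0, yz, zz]] :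
    Fin 4 → Fin 4 → ℝ) a b

theorem TT_symm (c : Fin 16 → ℝ) (p : Pt) (a b : Fin 4) : TT c p a b = TT c p b a := by
  fin_cases a <;> fin_cases b <;> rfl

theorem TT_smooth (c : Fin 16 → ℝ) (a b : Fin 4) : ContDiffOn ℝ ∞ (fun p => TT c p a b) UU := by
  have h0 := coord_smooth 0
  have h2 := coord_smooth 2
  have h3 := coord_smooth 3
  have hw := inv_smooth
  fin_cases a <;> fin_cases b <;> simp [TT] <;> fun_prop

theorem TT_lin (p : Pt) (a b : Fin 4) (c : Fin 16 → ℝ) :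
    ∑ i, c i * TT (Pi.single i 1) p a b = TT c p a b := by
  let L : (Fin 16 → ℝ) →ₗ[ℝ] ℝ :=
    { toFun := fun c => TT c p a b
      map_add' := by
        intro c d
        fin_cases a <;> fin_cases b <;> simp [TT] <;> ring
      map_smul' := by
        intro c d
        fin_cases a <;> fin_cases b <;> simp [TT] <;> ring }
  have := L.pi_apply_eq_sum_univ c
  change TT c p a b = _ at this
  rw [this]
  apply Finset.sum_congr rfl
  intro i _
  have e : (Pi.single i 1 : Fin 16 → ℝ) = fun j => if i = j then 1 else 0 := by
    funext j; simp [Pi.single_apply, eq_comm]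
  rw [e]; rfl

theorem TT_kil (c : Fin 16 → ℝ) : IsKillingTensor HH UU (TT c) := by
  apply killing_of _ (TT_smooth c) (TT_symm c)
  exact genKT_kil SS c

theorem TT_indep (c : Fin 16 → ℝ) (h : ∀ p ∈ UU, ∀ a b, TT c p a b = 0) : c = 0 := by
  have P : ∀ u y : ℝ, (![u, 0, y, 1] : Pt) ∈ UU := fun u y => by simp [UU]
  have h0 := h _ (P 0 0)
  have h1 := h _ (P 1 0)
  have h2 := h _ (P (-1) 0)
  have h3 := h _ (P 0 1)
  have h4 := h _ (P 0 (-1))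
  have a1 := h0 1 1
  have a2 := h0 1 2
  have a3 := h1 1 2
  have a4 := h0 0 1
  have a5 := h0 2 3
  have a6 := h3 2 3
  have a7 := h1 2 3
  have a8 := h0 3 3
  have a9 := h1 3 3
  have a10 := h2 3 3
  have a11 := h0 2 2
  have a12 := h1 2 2
  have a13 := h2 2 2
  have a14 := h0 0 2
  have a15 := h1 0 2
  have a16 := h0 0 0
  clear h h0 h1 h2 h3 h4
  simp [TT] at a1 a2 a3 a4 a5 a6 a7 a8 a9 a10 a11 a12 a13 a14 a15 a16
  funext i
  fin_cases i <;> simp <;> linarith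

theorem TT_span (K : Pt → Fin 4 → Fin 4 → ℝ) (hK : IsKillingTensor HH UU K) :
    ∃ c : Fin 16 → ℝ, ∀ p ∈ UU, ∀ a b, K p a b = TT c p a b := by
  obtain ⟨V, a, b, c, l0, l1, l2, q0, q1, q2, s0, s1, s2, t0, t1, w0, h1, h2, h3, h4, h5, h6, h7,
    h8, h9, h10⟩ := lemD SS _ (killing_to K hK)
  refine ⟨![V, a, b, c, l0, l1, l2, q0, q1 / 2, q2, s0, s1 / 2, s2, t0 / 2, t1 / 2, w0], ?_⟩
  intro p hp
  have ev : ∀ {f g : RR}, f = g → f.1 ⟨p, hp⟩ = g.1 ⟨p, hp⟩ := fun h => by rw [h]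
  replace h1 := ev h1
  replace h2 := ev h2
  replace h3 := ev h3
  replace h4 := ev h4
  replace h5 := ev h5
  replace h6 := ev h6
  replace h7 := ev h7
  replace h8 := ev h8
  replace h9 := ev h9
  replace h10 := ev h10
  simp only [toKT, r_add, r_sub, r_neg, r_mul, r_zero, r_two, r_four, r_alg, r_w, r_z, r_y, r_u,
      resU_apply] at h1 h2 h3 h4 h5 h6 h7 h8 h9 h10
  rw [h5] at h10
  have s10 : ∀ p, K p 1 0 = K p 0 1 := fun p => hK.2.1 p 1 0
  have s20 : ∀ p, K p 2 0 = K p 0 2 := fun p => hK.2.1 p 2 0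
  have s30 : ∀ p, K p 3 0 = K p 0 3 := fun p => hK.2.1 p 3 0
  have s21 : ∀ p, K p 2 1 = K p 1 2 := fun p => hK.2.1 p 2 1
  have s31 : ∀ p, K p 3 1 = K p 1 3 := fun p => hK.2.1 p 3 1
  have s32 : ∀ p, K p 3 2 = K p 2 3 := fun p => hK.2.1 p 3 2
  intro i j
  fin_cases i <;> fin_cases j <;> simp [TT, s10, s20, s30, s21, s31, s32] <;> linarith

end

/-- For the pp-wave metric with `H = z⁻²` on `{z > 0}`, the space of
Killing tensors is a real vector space of dimension exactly 16: there are 16 Killing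
tensors, linearly independent over `U`, spanning all Killing tensors over `U`. -/
theorem stmt4 :
    let U : Set Pt := {p | 0 < p 3}
    let H : Pt → ℝ := fun p => ((p 3) ^ 2)⁻¹
    ∃ B : Fin 16 → Pt → Fin 4 → Fin 4 → ℝ,
      (∀ i, IsKillingTensor H U (B i)) ∧
      (∀ c : Fin 16 → ℝ,
        (∀ p ∈ U, ∀ a b, (∑ i, c i * B i p a b) = 0) → c = 0) ∧
      (∀ K, IsKillingTensor H U K →
        ∃ c : Fin 16 → ℝ, ∀ p ∈ U, ∀ a b, K p a b = ∑ i, c i * B i p a b) := by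
  intro U H
  refine ⟨fun i => TT (Pi.single i 1), fun i => TT_kil _, ?_, ?_⟩
  · intro c h
    apply TT_indep
    intro p hp a b
    rw [← TT_lin]
    exact h p hp a b
  · intro K hK
    obtain ⟨c, hc⟩ := TT_span K hK
    refine ⟨c, fun p hp a b => ?_⟩
    rw [TT_lin]
    exact hc p hp a b

end
end

section
/- Consider the pp-wave metric with H = exp(y) on ℝ⁴, i.e. g = −2 du dv − 2 exp(y) du² + dy² + dz². Then every Killing tensor of g is reducible; equivalently, this spacetime admits no irreducible Killing tensors. -/
noncomputable section

def Sm : Subalgebra ℝ (Pt → ℝ) where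
  carrier := {f | ContDiff ℝ (⊤ : ℕ∞) f}
  mul_mem' := by
    intro a b ha hb
    simp only [Set.mem_ofPred_eq] at ha hb ⊢
    exact ContDiff.mul ha hb
  add_mem' := by
    intro a b ha hb
    simp only [Set.mem_ofPred_eq] at ha hb ⊢
    exact ContDiff.add ha hb
  algebraMap_mem' := by
    intro r
    simp only [Set.mem_ofPred_eq]
    exact contDiff_const

theorem mem_Sm {f : Pt → ℝ} : f ∈ Sm ↔ ContDiff ℝ (⊤ : ℕ∞) f := by
  rw [← SetLike.mem_coe]; exact Set.mem_ofPred_eq ▸ Iff.rfl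

theorem Sm.smooth (f : Sm) : ContDiff ℝ (⊤ : ℕ∞) f.1 := mem_Sm.1 f.2

theorem Sm.diff (f : Sm) : Differentiable ℝ f.1 := (Sm.smooth f).differentiable (by simp)

def D (i : Fin 4) (f : Sm) : Sm :=
  ⟨pd i f.1, mem_Sm.2 <| by
    have h : ContDiff ℝ (⊤ : ℕ∞) (fderiv ℝ f.1) := (Sm.smooth f).fderiv_right (by simp)
    exact h.clm_apply contDiff_const⟩

theorem D_val (i : Fin 4) (f : Sm) (p : Pt) : (D i f).1 p = fderiv ℝ f.1 p (Pi.single i 1) := rfl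

theorem D_add (i : Fin 4) (f g : Sm) : D i (f + g) = D i f + D i g := by
  apply Subtype.ext; funext p
  change fderiv ℝ (f.1 + g.1) p _ = _
  rw [fderiv_add (Sm.diff f p) (Sm.diff g p)]; rfl

theorem D_mul (i : Fin 4) (f g : Sm) : D i (f * g) = f * D i g + g * D i f := by
  apply Subtype.ext; funext p
  change fderiv ℝ (f.1 * g.1) p _ = _
  rw [fderiv_mul (Sm.diff f p) (Sm.diff g p)]; rfl

def cst (r : ℝ) : Sm := ⟨fun _ => r, mem_Sm.2 contDiff_const⟩

theorem D_cst (i : Fin 4) (r : ℝ) : D i (cst r) = 0 := by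
  apply Subtype.ext; funext p
  change fderiv ℝ (fun _ => r) p _ = _
  simp

theorem D_zero (i : Fin 4) : D i 0 = 0 := D_cst i 0
theorem D_one (i : Fin 4) : D i 1 = 0 := D_cst i 1
theorem N2 (i : Fin 4) : D i (2 : Sm) = 0 := D_cst i 2
theorem N3 (i : Fin 4) : D i (3 : Sm) = 0 := D_cst i 3
theorem N4 (i : Fin 4) : D i (4 : Sm) = 0 := D_cst i 4
theorem N5 (i : Fin 4) : D i (5 : Sm) = 0 := D_cst i 5
theorem N6 (i : Fin 4) : D i (6 : Sm) = 0 := D_cst i 6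
theorem N8 (i : Fin 4) : D i (8 : Sm) = 0 := D_cst i 8
theorem N10 (i : Fin 4) : D i (10 : Sm) = 0 := D_cst i 10
theorem N12 (i : Fin 4) : D i (12 : Sm) = 0 := D_cst i 12

theorem D_neg (i : Fin 4) (f : Sm) : D i (-f) = - D i f := by
  have h := D_add i f (-f)
  rw [add_neg_cancel, D_zero] at h
  linear_combination -h

theorem D_sub (i : Fin 4) (f g : Sm) : D i (f - g) = D i f - D i g := by
  rw [sub_eq_add_neg, D_add, D_neg, sub_eq_add_neg]

theorem D_comm (i j : Fin 4) (f : Sm) : D i (D j f) = D j (D i f) := by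
  apply Subtype.ext; funext p
  have hd : DifferentiableAt ℝ (fderiv ℝ f.1) p :=
    ((Sm.smooth f).fderiv_right (m := (⊤ : ℕ∞)) (by simp)).differentiable (by simp) p
  have key : ∀ i j : Fin 4, (D i (D j f)).1 p =
      fderiv ℝ (fderiv ℝ f.1) p (Pi.single i 1) (Pi.single j 1) := by
    intro i j
    change fderiv ℝ (fun q => fderiv ℝ f.1 q (Pi.single j 1)) p (Pi.single i 1) = _
    rw [fderiv_clm_apply hd (by fun_prop)]
    simp
  rw [key, key]
  have hs : IsSymmSndFDerivAt ℝ f.1 p :=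
    (Sm.smooth f).contDiffAt.isSymmSndFDerivAt (by simpa using (WithTop.coe_le_coe.2 (le_top : (2 : ℕ∞) ≤ ⊤)))
  exact hs _ _

def cx (i : Fin 4) : Sm := ⟨fun p => p i, mem_Sm.2 (contDiff_apply ℝ ℝ i)⟩

theorem D_cx (i j : Fin 4) : D i (cx j) = if i = j then 1 else 0 := by
  apply Subtype.ext; funext p
  change fderiv ℝ (fun q : Pt => q j) p _ = _
  rw [fderiv_apply (by fun_prop)]
  by_cases h : i = j
  · subst h; simp
  · simp [h, Ne.symm h]

def hh : Sm := ⟨fun p => Real.exp (p 2), mem_Sm.2 (contDiff_apply ℝ ℝ (2 : Fin 4)).exp⟩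

theorem D_hh (i : Fin 4) : D i hh = if i = 2 then hh else 0 := by
  apply Subtype.ext; funext p
  change fderiv ℝ (fun q : Pt => Real.exp (q 2)) p _ = _
  rw [fderiv_exp (by fun_prop), fderiv_apply (by fun_prop)]
  by_cases h : i = 2
  · subst h; simp [hh]
  · simp [h, Ne.symm h]

theorem hh_cancel {x : Sm} (h : hh * x = 0) : x = 0 := by
  apply Subtype.ext; funext p
  have := congrFun (congrArg Subtype.val h) p
  change Real.exp (p 2) * x.1 p = 0 at this
  simpa using this

theorem num_cancel (n : ℕ) (hn : n ≠ 0) {x : Sm} (h : (n : Sm) * x = 0) : x = 0 := by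
  apply Subtype.ext; funext p
  have := congrFun (congrArg Subtype.val h) p
  have h2 : (n : ℝ) * x.1 p = 0 := by simpa using this
  simpa [hn] using h2

theorem two_cancel {x : Sm} (h : 2 * x = 0) : x = 0 := num_cancel 2 (by norm_num) (by exact_mod_cast h)
theorem three_cancel {x : Sm} (h : 3 * x = 0) : x = 0 := num_cancel 3 (by norm_num) (by exact_mod_cast h)

theorem const_of (f : Sm) (h : ∀ i, D i f = 0) : ∃ r, f = cst r := by
  refine ⟨f.1 0, Subtype.ext (funext fun p => ?_)⟩
  refine is_const_of_fderiv_eq_zero (Sm.diff f) (fun q => ?_) p 0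
  apply ContinuousLinearMap.coe_injective
  refine (Pi.basisFun ℝ (Fin 4)).ext fun i => ?_
  have := congrFun (congrArg Subtype.val (h i)) q
  simpa [D_val] using this

theorem D10 (f) : D 1 (D 0 f) = D 0 (D 1 f) := D_comm _ _ _
theorem D20 (f) : D 2 (D 0 f) = D 0 (D 2 f) := D_comm _ _ _
theorem D30 (f) : D 3 (D 0 f) = D 0 (D 3 f) := D_comm _ _ _
theorem D21 (f) : D 2 (D 1 f) = D 1 (D 2 f) := D_comm _ _ _
theorem D31 (f) : D 3 (D 1 f) = D 1 (D 3 f) := D_comm _ _ _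
theorem D32 (f) : D 3 (D 2 f) = D 2 (D 3 f) := D_comm _ _ _
theorem H0 : D 0 hh = 0 := by simp [D_hh]
theorem H1 : D 1 hh = 0 := by simp [D_hh]
theorem H2 : D 2 hh = hh := by simp [D_hh]
theorem H3 : D 3 hh = 0 := by simp [D_hh]

set_option linter.unusedSimpArgs false

theorem dz (i : Fin 4) {x : Sm} (h : x = 0) : D i x = 0 := by rw [h, D_zero]

theorem canc (n k : ℕ) (hn : n ≠ 0) {x : Sm} (h : (n : Sm) * hh ^ k * x = 0) : x = 0 := by
  induction k with
  | zero => exact num_cancel n hn (by simpa using h)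
  | succ k ih => exact ih (hh_cancel (by linear_combination h))

theorem solve_pde (P Q R S T A B C E F : Sm)
    (e1 : D 1 P = 0)
    (e2 : D 2 P + 2 * D 1 Q = 0)
    (e3 : D 3 P + 2 * D 1 S = 0)
    (e4 : D 1 A + 2 * D 2 Q = 0)
    (e5 : D 1 B + 2 * D 3 S = 0)
    (e6 : D 1 T + D 2 S + D 3 Q = 0)
    (e7 : D 2 A = 0)
    (e8 : D 3 A + 2 * D 2 T = 0)
    (e9 : D 2 B + 2 * D 3 T = 0)
    (e10 : D 3 B = 0)
    (e11 : D 0 P + 2 * D 1 R = 0)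
    (e12 : D 0 Q + D 1 C + D 2 R - 2 * hh * P = 0)
    (e13 : D 0 S + D 1 E + D 3 R = 0)
    (e14 : D 0 A + 2 * D 2 C - 4 * hh * Q = 0)
    (e15 : D 0 T + D 2 E + D 3 C - 2 * hh * S = 0)
    (e16 : D 0 B + 2 * D 3 E = 0)
    (e17 : D 1 F + 2 * D 0 R - 2 * hh * Q = 0)
    (e18 : D 2 F + 2 * D 0 C - 4 * hh * R - 2 * hh * A = 0)
    (e19 : D 3 F + 2 * D 0 E - 2 * hh * T = 0)
    (e20 : D 0 F - 2 * hh * C = 0) :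
    (D 2 P = 0) ∧
    (D 3 P = 0) ∧
    (D 0 (D 0 (D 0 P)) = 0) ∧
    (Q - D 0 P = 0) ∧
    (D 2 R - 2 * hh * P = 0) ∧
    (D 0 (D 0 R) - 2 * hh * D 0 (D 0 P) = 0) ∧
    (D 0 (D 0 S) + 2 * D 0 (D 3 R) = 0) ∧
    (D 3 (D 3 R) = 0) ∧
    (D 1 S = 0) ∧
    (D 2 S = 0) ∧
    (D 3 S = 0) ∧
    (D 0 (D 0 (D 0 S)) = 0) ∧
    (D 2 A = 0) ∧
    (D 0 A = 0) ∧
    (D 1 A = 0) ∧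
    (D 3 A = 0) ∧
    (D 1 B = 0) ∧
    (D 2 B = 0) ∧
    (D 0 (D 0 (D 0 B)) = 0) ∧
    (T - 2 * D 3 R - 2 * D 0 S = 0) ∧
    (C - 2 * D 0 R + 2 * hh * D 0 P = 0) ∧
    (2 * D 1 E + T = 0) ∧
    (D 2 E - 2 * hh * S = 0) ∧
    (D 0 (D 0 E) - 2 * hh * D 0 (D 0 S) = 0) := by
  have p3 : D 2 (D 2 (D 2 P)) = 0 := by
    linear_combination (norm := ((try simp only [D_add, D_sub, D_neg, D_mul, N2, N3, N4, N5, N6, N8, N10, N12, D_zero, H0, H1, H2, H3, D10, D20, D30, D21, D31, D32, Nat.cast_ofNat, Nat.cast_one]); ring1)) (dz 2 (dz 2 e2)) - (dz 2 (dz 1 e4)) + (dz 1 (dz 1 e7))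
  have q3 : D 2 (D 2 (D 2 Q)) = 0 := by
    apply canc 2 0 (by norm_num)
    linear_combination (norm := ((try simp only [D_add, D_sub, D_neg, D_mul, N2, N3, N4, N5, N6, N8, N10, N12, D_zero, H0, H1, H2, H3, D10, D20, D30, D21, D31, D32, Nat.cast_ofNat, Nat.cast_one]); ring1)) (dz 2 (dz 2 e4)) - (dz 2 (dz 1 e7))
  have k1 : D 2 (D 2 R) + 2 * D 0 (D 2 Q) - 2 * hh * P - 3 * hh * D 2 P = 0 := by
    apply canc 2 0 (by norm_num)
    linear_combination (norm := ((try simp only [D_add, D_sub, D_neg, D_mul, N2, N3, N4, N5, N6, N8, N10, N12, D_zero, H0, H1, H2, H3, D10, D20, D30, D21, D31, D32, Nat.cast_ofNat, Nat.cast_one]); ring1)) 2 * (dz 2 e12) + (dz 0 e4) - (dz 1 e14) - 2 * hh * e2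
  have k2 : D 0 (D 0 Q) + 2 * D 0 (D 2 R) - 3 * hh * D 0 P - 3 * hh * D 2 Q - hh * Q = 0 := by
    apply canc 2 0 (by norm_num)
    linear_combination (norm := ((try simp only [D_add, D_sub, D_neg, D_mul, N2, N3, N4, N5, N6, N8, N10, N12, D_zero, H0, H1, H2, H3, D10, D20, D30, D21, D31, D32, Nat.cast_ofNat, Nat.cast_one]); ring1)) 2 * (dz 0 e12) + (dz 2 e17) - 2 * hh * e4 - (dz 1 e18) - 2 * hh * e11
  have k3 : D 0 (D 0 R) - 2 * hh * D 0 Q - hh * D 2 R + 2 * hh * hh * P = 0 := by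
    apply canc 2 0 (by norm_num)
    linear_combination (norm := ((try simp only [D_add, D_sub, D_neg, D_mul, N2, N3, N4, N5, N6, N8, N10, N12, D_zero, H0, H1, H2, H3, D10, D20, D30, D21, D31, D32, Nat.cast_ofNat, Nat.cast_one]); ring1)) (dz 0 e17) - 2 * hh * e12 - (dz 1 e20)
  have k4 : -3 * D 0 (D 0 (D 2 P)) + 3 * hh * D 2 (D 2 P) + hh * D 2 P = 0 := by
    linear_combination (norm := ((try simp only [D_add, D_sub, D_neg, D_mul, N2, N3, N4, N5, N6, N8, N10, N12, D_zero, H0, H1, H2, H3, D10, D20, D30, D21, D31, D32, Nat.cast_ofNat, Nat.cast_one]); ring1)) -2 * (dz 2 (dz 0 e11)) + 2 * (dz 1 k2) + hh * e2 - (dz 0 (dz 0 e2)) + 3 * hh * (dz 2 e2) + 6 * hh * (dz 0 e1)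
  have k5 : 5 * D 2 (D 2 P) + D 2 P = 0 := by
    apply canc 1 1 (by norm_num)
    linear_combination (norm := ((try simp only [D_add, D_sub, D_neg, D_mul, N2, N3, N4, N5, N6, N8, N10, N12, D_zero, H0, H1, H2, H3, D10, D20, D30, D21, D31, D32, Nat.cast_ofNat, Nat.cast_one]); ring1)) (dz 2 (dz 2 k4)) + 3 * (dz 0 (dz 0 p3)) - 3 * hh * (dz 2 p3) - 7 * hh * p3
  have p2 : D 2 P = 0 := by
    linear_combination (norm := ((try simp only [D_add, D_sub, D_neg, D_mul, N2, N3, N4, N5, N6, N8, N10, N12, D_zero, H0, H1, H2, H3, D10, D20, D30, D21, D31, D32, Nat.cast_ofNat, Nat.cast_one]); ring1)) -5 * (dz 2 k5) + 25 * p3 + k5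
  have q1 : D 1 Q = 0 := by
    apply canc 2 0 (by norm_num)
    linear_combination (norm := (push_cast; ring1)) e2 - p2
  have k6 : -3 * D 0 (D 0 (D 2 Q)) + hh * D 0 P - 3 * hh * D 2 (D 2 Q) - 4 * hh * D 2 Q - hh * Q = 0 := by
    linear_combination (norm := ((try simp only [D_add, D_sub, D_neg, D_mul, N2, N3, N4, N5, N6, N8, N10, N12, D_zero, H0, H1, H2, H3, D10, D20, D30, D21, D31, D32, Nat.cast_ofNat, Nat.cast_one]); ring1)) (dz 2 k2) - 2 * (dz 0 k1) - 3 * hh * (dz 0 p2)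
  have k7 : D 0 P - 12 * D 2 (D 2 Q) - 6 * D 2 Q - Q = 0 := by
    apply canc 1 1 (by norm_num)
    linear_combination (norm := ((try simp only [D_add, D_sub, D_neg, D_mul, N2, N3, N4, N5, N6, N8, N10, N12, D_zero, H0, H1, H2, H3, D10, D20, D30, D21, D31, D32, Nat.cast_ofNat, Nat.cast_one]); ring1)) (dz 2 (dz 2 k6)) + 3 * (dz 0 (dz 0 q3)) + 3 * hh * (dz 2 q3) + 10 * hh * q3 - 2 * hh * (dz 0 p2) - hh * (dz 2 (dz 0 p2))
  have k8 : D 2 (D 2 Q) = 0 := by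
    linear_combination (norm := ((try simp only [D_add, D_sub, D_neg, D_mul, N2, N3, N4, N5, N6, N8, N10, N12, D_zero, H0, H1, H2, H3, D10, D20, D30, D21, D31, D32, Nat.cast_ofNat, Nat.cast_one]); ring1)) -6 * q3 - (dz 2 (dz 2 k7)) - 12 * (dz 2 q3) + (dz 2 (dz 0 p2))
  have q2 : D 2 Q = 0 := by
    linear_combination (norm := ((try simp only [D_add, D_sub, D_neg, D_mul, N2, N3, N4, N5, N6, N8, N10, N12, D_zero, H0, H1, H2, H3, D10, D20, D30, D21, D31, D32, Nat.cast_ofNat, Nat.cast_one]); ring1)) -6 * k8 - (dz 2 k7) - 12 * q3 + (dz 0 p2)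
  have qp : Q - D 0 P = 0 := by
    linear_combination (norm := (push_cast; ring1)) -6 * q2 - 12 * k8 - k7
  have p000 : D 0 (D 0 (D 0 P)) = 0 := by
    linear_combination (norm := ((try simp only [D_add, D_sub, D_neg, D_mul, N2, N3, N4, N5, N6, N8, N10, N12, D_zero, H0, H1, H2, H3, D10, D20, D30, D21, D31, D32, Nat.cast_ofNat, Nat.cast_one]); ring1)) (dz 0 (dz 0 e11)) - 2 * (dz 1 k3) + 4 * hh * hh * e1 - hh * (dz 2 e11) + hh * (dz 0 p2) - 4 * hh * (dz 0 q1)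
  have k9 : D 2 (D 2 R) - 2 * hh * P = 0 := by
    linear_combination (norm := ((try simp only [D_add, D_sub, D_neg, D_mul, N2, N3, N4, N5, N6, N8, N10, N12, D_zero, H0, H1, H2, H3, D10, D20, D30, D21, D31, D32, Nat.cast_ofNat, Nat.cast_one]); ring1)) k1 - 2 * (dz 0 q2) + 3 * hh * p2
  have k10 : D 0 (D 2 R) - 2 * hh * D 0 P = 0 := by
    apply canc 2 0 (by norm_num)
    linear_combination (norm := ((try simp only [D_add, D_sub, D_neg, D_mul, N2, N3, N4, N5, N6, N8, N10, N12, D_zero, H0, H1, H2, H3, D10, D20, D30, D21, D31, D32, Nat.cast_ofNat, Nat.cast_one]); ring1)) k2 - (dz 0 (dz 0 qp)) - p000 + 3 * hh * q2 + hh * qp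
  have r2 : D 2 R - 2 * hh * P = 0 := by
    apply canc 1 1 (by norm_num)
    linear_combination (norm := ((try simp only [D_add, D_sub, D_neg, D_mul, N2, N3, N4, N5, N6, N8, N10, N12, D_zero, H0, H1, H2, H3, D10, D20, D30, D21, D31, D32, Nat.cast_ofNat, Nat.cast_one]); ring1)) -(dz 2 k3) + (dz 0 k10) - hh * k9 + 2 * hh * hh * p2 - 2 * hh * (dz 0 q2) - 2 * hh * (dz 0 qp)
  have r00 : D 0 (D 0 R) - 2 * hh * D 0 (D 0 P) = 0 := by
    linear_combination (norm := ((try simp only [D_add, D_sub, D_neg, D_mul, N2, N3, N4, N5, N6, N8, N10, N12, D_zero, H0, H1, H2, H3, D10, D20, D30, D21, D31, D32, Nat.cast_ofNat, Nat.cast_one]); ring1)) k3 + hh * r2 + 2 * hh * (dz 0 qp)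
  have c1 : D 1 C + D 0 (D 0 P) = 0 := by
    linear_combination (norm := ((try simp only [D_add, D_sub, D_neg, D_mul, N2, N3, N4, N5, N6, N8, N10, N12, D_zero, H0, H1, H2, H3, D10, D20, D30, D21, D31, D32, Nat.cast_ofNat, Nat.cast_one]); ring1)) -(dz 0 qp) - r2 + e12
  have s22 : D 2 (D 2 S) = 0 := by
    apply canc 2 0 (by norm_num)
    linear_combination (norm := ((try simp only [D_add, D_sub, D_neg, D_mul, N2, N3, N4, N5, N6, N8, N10, N12, D_zero, H0, H1, H2, H3, D10, D20, D30, D21, D31, D32, Nat.cast_ofNat, Nat.cast_one]); ring1)) 2 * (dz 2 e6) - (dz 1 e8) + (dz 3 e4) - 4 * (dz 3 q2)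
  have k11 : 2 * D 0 (D 2 S) + hh * D 3 P + 2 * D 0 (D 0 (D 3 P)) = 0 := by
    linear_combination (norm := ((try simp only [D_add, D_sub, D_neg, D_mul, N2, N3, N4, N5, N6, N8, N10, N12, D_zero, H0, H1, H2, H3, D10, D20, D30, D21, D31, D32, Nat.cast_ofNat, Nat.cast_one]); ring1)) -(dz 3 r2) + (dz 2 e13) + (dz 3 c1) - (dz 3 (dz 0 qp)) - (dz 1 e15) + (dz 0 e6) - hh * e3
  have p3z : D 3 P = 0 := by
    apply canc 1 1 (by norm_num)
    linear_combination (norm := ((try simp only [D_add, D_sub, D_neg, D_mul, N2, N3, N4, N5, N6, N8, N10, N12, D_zero, H0, H1, H2, H3, D10, D20, D30, D21, D31, D32, Nat.cast_ofNat, Nat.cast_one]); ring1)) -2 * (dz 3 (dz 0 (dz 0 p2))) + (dz 2 k11) - 2 * (dz 0 s22) - hh * (dz 3 p2)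
  have s1 : D 1 S = 0 := by
    apply canc 2 0 (by norm_num)
    linear_combination (norm := (push_cast; ring1)) e3 - p3z
  have k12 : 4 * D 0 (D 3 R) - 2 * hh * D 2 S + 2 * D 0 (D 0 S) = 0 := by
    linear_combination (norm := ((try simp only [D_add, D_sub, D_neg, D_mul, N2, N3, N4, N5, N6, N8, N10, N12, D_zero, H0, H1, H2, H3, D10, D20, D30, D21, D31, D32, Nat.cast_ofNat, Nat.cast_one]); ring1)) 2 * (dz 0 e13) - (dz 1 e19) - 2 * hh * e6 + (dz 3 e17) + 4 * hh * (dz 3 qp) + 4 * hh * (dz 0 p3z)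
  have s2 : D 2 S = 0 := by
    apply canc 2 1 (by norm_num)
    linear_combination (norm := ((try simp only [D_add, D_sub, D_neg, D_mul, N2, N3, N4, N5, N6, N8, N10, N12, D_zero, H0, H1, H2, H3, D10, D20, D30, D21, D31, D32, Nat.cast_ofNat, Nat.cast_one]); ring1)) -(dz 2 k12) + (dz 0 k11) - 2 * hh * s22 + 4 * (dz 3 (dz 0 r2)) + 7 * hh * (dz 0 p3z) - 2 * (dz 0 (dz 0 (dz 0 p3z)))
  have t1 : D 1 T = 0 := by
    linear_combination (norm := ((try simp only [D_add, D_sub, D_neg, D_mul, N2, N3, N4, N5, N6, N8, N10, N12, D_zero, H0, H1, H2, H3, D10, D20, D30, D21, D31, D32, Nat.cast_ofNat, Nat.cast_one]); ring1)) e6 - s2 - (dz 3 qp) - (dz 0 p3z)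
  have s00 : D 0 (D 0 S) + 2 * D 0 (D 3 R) = 0 := by
    apply canc 2 0 (by norm_num)
    linear_combination (norm := (push_cast; ring1)) k12 + 2 * hh * s2
  have t22 : D 2 (D 2 T) = 0 := by
    apply canc 2 0 (by norm_num)
    linear_combination (norm := ((try simp only [D_add, D_sub, D_neg, D_mul, N2, N3, N4, N5, N6, N8, N10, N12, D_zero, H0, H1, H2, H3, D10, D20, D30, D21, D31, D32, Nat.cast_ofNat, Nat.cast_one]); ring1)) (dz 2 e8) - (dz 3 e7)
  have k13 : D 3 (D 3 C) + 2 * D 0 (D 3 T) - 2 * hh * D 3 S = 0 := by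
    apply canc 2 0 (by norm_num)
    linear_combination (norm := ((try simp only [D_add, D_sub, D_neg, D_mul, N2, N3, N4, N5, N6, N8, N10, N12, D_zero, H0, H1, H2, H3, D10, D20, D30, D21, D31, D32, Nat.cast_ofNat, Nat.cast_one]); ring1)) (dz 0 e9) + 2 * (dz 3 e15) - (dz 2 e16)
  have k14 : 2 * hh * D 3 S - 3 * D 0 (D 2 (D 3 T)) = 0 := by
    apply canc 2 0 (by norm_num)
    linear_combination (norm := ((try simp only [D_add, D_sub, D_neg, D_mul, N2, N3, N4, N5, N6, N8, N10, N12, D_zero, H0, H1, H2, H3, D10, D20, D30, D21, D31, D32, Nat.cast_ofNat, Nat.cast_one]); ring1)) -2 * (dz 2 k13) - 4 * hh * (dz 3 s2) - (dz 3 (dz 0 e8)) + 4 * hh * (dz 3 (dz 3 qp)) + (dz 3 (dz 3 e14)) + 4 * hh * (dz 3 (dz 0 p3z))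
  have s3 : D 3 S = 0 := by
    apply canc 2 1 (by norm_num)
    linear_combination (norm := ((try simp only [D_add, D_sub, D_neg, D_mul, N2, N3, N4, N5, N6, N8, N10, N12, D_zero, H0, H1, H2, H3, D10, D20, D30, D21, D31, D32, Nat.cast_ofNat, Nat.cast_one]); ring1)) 3 * (dz 3 (dz 0 t22)) + (dz 2 k14) - 2 * hh * (dz 3 s2)
  have b1 : D 1 B = 0 := by
    linear_combination (norm := (push_cast; ring1)) -2 * s3 + e5
  have r33 : D 3 (D 3 R) = 0 := by
    apply canc 2 0 (by norm_num)
    linear_combination (norm := ((try simp only [D_add, D_sub, D_neg, D_mul, N2, N3, N4, N5, N6, N8, N10, N12, D_zero, H0, H1, H2, H3, D10, D20, D30, D21, D31, D32, Nat.cast_ofNat, Nat.cast_one]); ring1)) 2 * (dz 3 e13) - 2 * (dz 0 s3) - (dz 1 e16) + (dz 0 b1)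
  have s000 : D 0 (D 0 (D 0 S)) = 0 := by
    linear_combination (norm := ((try simp only [D_add, D_sub, D_neg, D_mul, N2, N3, N4, N5, N6, N8, N10, N12, D_zero, H0, H1, H2, H3, D10, D20, D30, D21, D31, D32, Nat.cast_ofNat, Nat.cast_one]); ring1)) (dz 0 s00) - 2 * (dz 3 r00) - 4 * hh * (dz 0 (dz 0 p3z))
  have k15 : 4 * D 0 (D 3 C) - 4 * hh * D 3 R - 4 * hh * D 0 S + 6 * hh * D 2 T + 2 * hh * T + 2 * D 0 (D 0 T) = 0 := by
    linear_combination (norm := ((try simp only [D_add, D_sub, D_neg, D_mul, N2, N3, N4, N5, N6, N8, N10, N12, D_zero, H0, H1, H2, H3, D10, D20, D30, D21, D31, D32, Nat.cast_ofNat, Nat.cast_one]); ring1)) 2 * (dz 0 e15) + 2 * hh * e8 + (dz 3 e18) - (dz 2 e19)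
  have k16 : 4 * D 3 R - 10 * D 2 T - 2 * T + 4 * D 0 S = 0 := by
    apply canc 1 1 (by norm_num)
    linear_combination (norm := ((try simp only [D_add, D_sub, D_neg, D_mul, N2, N3, N4, N5, N6, N8, N10, N12, D_zero, H0, H1, H2, H3, D10, D20, D30, D21, D31, D32, Nat.cast_ofNat, Nat.cast_one]); ring1)) 14 * hh * t22 - 8 * hh * (dz 0 s2) - 8 * hh * (dz 3 r2) - 24 * hh * hh * p3z + 8 * hh * (dz 3 (dz 0 qp)) + 8 * hh * (dz 0 (dz 0 p3z)) + 8 * hh * (dz 3 (dz 2 (dz 0 qp))) + 2 * (dz 3 (dz 2 (dz 0 e14))) - 4 * hh * (dz 3 (dz 2 r2)) - 4 * hh * (dz 2 (dz 0 s2)) - (dz 2 (dz 2 k15)) + 6 * (dz 0 (dz 0 t22)) + 6 * hh * (dz 2 t22) - 8 * hh * hh * (dz 2 p3z) - 2 * (dz 2 (dz 0 (dz 0 e8))) + 8 * hh * (dz 2 (dz 0 (dz 0 p3z)))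
  have t2 : D 2 T = 0 := by
    apply canc 2 0 (by norm_num)
    linear_combination (norm := ((try simp only [D_add, D_sub, D_neg, D_mul, N2, N3, N4, N5, N6, N8, N10, N12, D_zero, H0, H1, H2, H3, D10, D20, D30, D21, D31, D32, Nat.cast_ofNat, Nat.cast_one]); ring1)) -(dz 2 k16) - 10 * t22 + 4 * (dz 0 s2) + 4 * (dz 3 r2) + 8 * hh * p3z
  have tt : T - 2 * D 3 R - 2 * D 0 S = 0 := by
    apply canc 2 0 (by norm_num)
    linear_combination (norm := (push_cast; ring1)) -10 * t2 - k16
  have t3 : D 3 T = 0 := by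
    linear_combination (norm := ((try simp only [D_add, D_sub, D_neg, D_mul, N2, N3, N4, N5, N6, N8, N10, N12, D_zero, H0, H1, H2, H3, D10, D20, D30, D21, D31, D32, Nat.cast_ofNat, Nat.cast_one]); ring1)) (dz 3 tt) + 2 * (dz 0 s3) + 2 * r33
  have b2 : D 2 B = 0 := by
    linear_combination (norm := (push_cast; ring1)) -2 * t3 + e9
  have a3 : D 3 A = 0 := by
    linear_combination (norm := (push_cast; ring1)) -2 * t2 + e8
  have a1 : D 1 A = 0 := by
    linear_combination (norm := (push_cast; ring1)) -2 * q2 + e4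
  have k17 : 2 * D 0 (D 0 C) - 4 * hh * D 0 R - 3 * hh * D 0 A + 2 * hh * C + 4 * hh * hh * D 0 P = 0 := by
    linear_combination (norm := ((try simp only [D_add, D_sub, D_neg, D_mul, N2, N3, N4, N5, N6, N8, N10, N12, D_zero, H0, H1, H2, H3, D10, D20, D30, D21, D31, D32, Nat.cast_ofNat, Nat.cast_one]); ring1)) (dz 0 e18) - 4 * hh * hh * qp - hh * e14 - (dz 2 e20)
  have k18 : 4 * D 0 R + 5 * D 0 A - 2 * C - 4 * hh * D 0 P = 0 := by
    apply canc 1 1 (by norm_num)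
    linear_combination (norm := ((try simp only [D_add, D_sub, D_neg, D_mul, N2, N3, N4, N5, N6, N8, N10, N12, D_zero, H0, H1, H2, H3, D10, D20, D30, D21, D31, D32, Nat.cast_ofNat, Nat.cast_one]); ring1)) 4 * hh * (dz 0 (dz 0 qp)) + 12 * hh * hh * (dz 0 p2) - 8 * hh * (dz 0 r2) + 12 * hh * hh * qp + 2 * hh * e14 - 7 * hh * (dz 0 e7) + 4 * hh * p000 + 4 * hh * (dz 2 (dz 0 (dz 0 qp))) + (dz 2 (dz 0 (dz 0 e14))) + 4 * hh * hh * (dz 2 (dz 0 p2)) - 4 * hh * (dz 2 (dz 0 r2)) - (dz 2 (dz 2 k17)) + 4 * hh * hh * (dz 2 qp) + hh * (dz 2 e14) - 3 * hh * (dz 2 (dz 0 e7)) - (dz 0 (dz 0 (dz 0 e7))) + 4 * hh * (dz 2 p000)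
  have a0 : D 0 A = 0 := by
    linear_combination (norm := ((try simp only [D_add, D_sub, D_neg, D_mul, N2, N3, N4, N5, N6, N8, N10, N12, D_zero, H0, H1, H2, H3, D10, D20, D30, D21, D31, D32, Nat.cast_ofNat, Nat.cast_one]); ring1)) 4 * hh * (dz 0 p2) + (dz 2 k18) - 4 * (dz 0 r2) + 4 * hh * qp + e14 - 5 * (dz 0 e7)
  have cc : C - 2 * D 0 R + 2 * hh * D 0 P = 0 := by
    apply canc 2 0 (by norm_num)
    linear_combination (norm := (push_cast; ring1)) -k18 + 5 * a0
  have ev : 2 * D 1 E + T = 0 := by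
    linear_combination (norm := (push_cast; ring1)) tt + 2 * e13
  have ey : D 2 E - 2 * hh * S = 0 := by
    linear_combination (norm := ((try simp only [D_add, D_sub, D_neg, D_mul, N2, N3, N4, N5, N6, N8, N10, N12, D_zero, H0, H1, H2, H3, D10, D20, D30, D21, D31, D32, Nat.cast_ofNat, Nat.cast_one]); ring1)) -(dz 0 tt) + e15 - 2 * s00 - (dz 3 cc) + 2 * hh * (dz 0 p3z)
  have e00 : D 0 (D 0 E) - 2 * hh * D 0 (D 0 S) = 0 := by
    apply canc 2 0 (by norm_num)
    linear_combination (norm := ((try simp only [D_add, D_sub, D_neg, D_mul, N2, N3, N4, N5, N6, N8, N10, N12, D_zero, H0, H1, H2, H3, D10, D20, D30, D21, D31, D32, Nat.cast_ofNat, Nat.cast_one]); ring1)) 2 * hh * (dz 0 tt) + (dz 0 e19) - (dz 3 e20) + 4 * hh * hh * (dz 0 p3z) - 2 * hh * (dz 3 cc)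
  have b000 : D 0 (D 0 (D 0 B)) = 0 := by
    linear_combination (norm := ((try simp only [D_add, D_sub, D_neg, D_mul, N2, N3, N4, N5, N6, N8, N10, N12, D_zero, H0, H1, H2, H3, D10, D20, D30, D21, D31, D32, Nat.cast_ofNat, Nat.cast_one]); ring1)) -4 * hh * (dz 0 (dz 0 s3)) - 2 * (dz 3 e00) + (dz 0 (dz 0 e16))
  exact ⟨p2, p3z, p000, qp, r2, r00, s00, r33, s1, s2, s3, s000, e7, a0, a1, a3, b1, b2, b000, tt, cc, ev, ey, e00⟩
theorem X00 : D 0 (cx 0) = 1 := by simp [D_cx]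
theorem X01 : D 0 (cx 1) = 0 := by simp [D_cx]
theorem X03 : D 0 (cx 3) = 0 := by simp [D_cx]
theorem X10 : D 1 (cx 0) = 0 := by simp [D_cx]
theorem X11 : D 1 (cx 1) = 1 := by simp [D_cx]
theorem X13 : D 1 (cx 3) = 0 := by simp [D_cx]
theorem X20 : D 2 (cx 0) = 0 := by simp [D_cx]
theorem X21 : D 2 (cx 1) = 0 := by simp [D_cx]
theorem X23 : D 2 (cx 3) = 0 := by simp [D_cx]
theorem X30 : D 3 (cx 0) = 0 := by simp [D_cx]
theorem X31 : D 3 (cx 1) = 0 := by simp [D_cx]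
theorem X33 : D 3 (cx 3) = 1 := by simp [D_cx]

theorem const4 (f : Sm) (h0 : D 0 f = 0) (h1 : D 1 f = 0) (h2 : D 2 f = 0) (h3 : D 3 f = 0) :
    ∃ r, f = cst r :=
  const_of f (by intro i; fin_cases i <;> assumption)

theorem cst_half (r : ℝ) : cst r = 2 * cst (r / 2) := by
  apply Subtype.ext; funext p
  change r = 2 * (r / 2)
  ring

theorem affine (f : Sm) (h1 : D 1 f = 0) (h2 : D 2 f = 0) (h3 : D 3 f = 0)
    (h0 : D 0 (D 0 f) = 0) : ∃ b c, f = cst b * cx 0 + cst c := by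
  obtain ⟨b, hb⟩ := const4 (D 0 f) h0
    (by linear_combination (norm := (simp only [D_add, D_sub, D_neg, D_mul, N2, N3, N4, N5, N6, N8, N10, N12, D_zero, H0, H1, H2, H3, D10, D20, D30, D21, D31, D32, Nat.cast_ofNat, Nat.cast_one, X00, X01, X03, X10, X11, X13, X20, X21, X23, X30, X31, X33, D_cst, D_one]; ring1)) dz 0 h1) (by linear_combination (norm := (simp only [D_add, D_sub, D_neg, D_mul, N2, N3, N4, N5, N6, N8, N10, N12, D_zero, H0, H1, H2, H3, D10, D20, D30, D21, D31, D32, Nat.cast_ofNat, Nat.cast_one, X00, X01, X03, X10, X11, X13, X20, X21, X23, X30, X31, X33, D_cst, D_one]; ring1)) dz 0 h2)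
    (by linear_combination (norm := (simp only [D_add, D_sub, D_neg, D_mul, N2, N3, N4, N5, N6, N8, N10, N12, D_zero, H0, H1, H2, H3, D10, D20, D30, D21, D31, D32, Nat.cast_ofNat, Nat.cast_one, X00, X01, X03, X10, X11, X13, X20, X21, X23, X30, X31, X33, D_cst, D_one]; ring1)) dz 0 h3)
  obtain ⟨c, hc⟩ := const4 (f - cst b * cx 0) (by linear_combination (norm := (simp only [D_add, D_sub, D_neg, D_mul, N2, N3, N4, N5, N6, N8, N10, N12, D_zero, H0, H1, H2, H3, D10, D20, D30, D21, D31, D32, Nat.cast_ofNat, Nat.cast_one, X00, X01, X03, X10, X11, X13, X20, X21, X23, X30, X31, X33, D_cst, D_one]; ring1)) hb)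
    (by linear_combination (norm := (simp only [D_add, D_sub, D_neg, D_mul, N2, N3, N4, N5, N6, N8, N10, N12, D_zero, H0, H1, H2, H3, D10, D20, D30, D21, D31, D32, Nat.cast_ofNat, Nat.cast_one, X00, X01, X03, X10, X11, X13, X20, X21, X23, X30, X31, X33, D_cst, D_one]; ring1)) h1) (by linear_combination (norm := (simp only [D_add, D_sub, D_neg, D_mul, N2, N3, N4, N5, N6, N8, N10, N12, D_zero, H0, H1, H2, H3, D10, D20, D30, D21, D31, D32, Nat.cast_ofNat, Nat.cast_one, X00, X01, X03, X10, X11, X13, X20, X21, X23, X30, X31, X33, D_cst, D_one]; ring1)) h2) (by linear_combination (norm := (simp only [D_add, D_sub, D_neg, D_mul, N2, N3, N4, N5, N6, N8, N10, N12, D_zero, H0, H1, H2, H3, D10, D20, D30, D21, D31, D32, Nat.cast_ofNat, Nat.cast_one, X00, X01, X03, X10, X11, X13, X20, X21, X23, X30, X31, X33, D_cst, D_one]; ring1)) h3)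
  exact ⟨b, c, by linear_combination hc⟩

theorem quad (f : Sm) (h1 : D 1 f = 0) (h2 : D 2 f = 0) (h3 : D 3 f = 0)
    (h0 : D 0 (D 0 (D 0 f)) = 0) :
    ∃ a b c, f = cst a * cx 0 * cx 0 + 2 * cst b * cx 0 + cst c := by
  obtain ⟨a, b, hb⟩ := affine (D 0 f) (by linear_combination (norm := (simp only [D_add, D_sub, D_neg, D_mul, N2, N3, N4, N5, N6, N8, N10, N12, D_zero, H0, H1, H2, H3, D10, D20, D30, D21, D31, D32, Nat.cast_ofNat, Nat.cast_one, X00, X01, X03, X10, X11, X13, X20, X21, X23, X30, X31, X33, D_cst, D_one]; ring1)) dz 0 h1)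
    (by linear_combination (norm := (simp only [D_add, D_sub, D_neg, D_mul, N2, N3, N4, N5, N6, N8, N10, N12, D_zero, H0, H1, H2, H3, D10, D20, D30, D21, D31, D32, Nat.cast_ofNat, Nat.cast_one, X00, X01, X03, X10, X11, X13, X20, X21, X23, X30, X31, X33, D_cst, D_one]; ring1)) dz 0 h2) (by linear_combination (norm := (simp only [D_add, D_sub, D_neg, D_mul, N2, N3, N4, N5, N6, N8, N10, N12, D_zero, H0, H1, H2, H3, D10, D20, D30, D21, D31, D32, Nat.cast_ofNat, Nat.cast_one, X00, X01, X03, X10, X11, X13, X20, X21, X23, X30, X31, X33, D_cst, D_one]; ring1)) dz 0 h3) h0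
  rw [cst_half a, cst_half b] at hb
  obtain ⟨c, hc⟩ := const4 (f - cst (a / 2) * cx 0 * cx 0 - 2 * cst (b / 2) * cx 0)
    (by linear_combination (norm := (simp only [D_add, D_sub, D_neg, D_mul, N2, N3, N4, N5, N6, N8, N10, N12, D_zero, H0, H1, H2, H3, D10, D20, D30, D21, D31, D32, Nat.cast_ofNat, Nat.cast_one, X00, X01, X03, X10, X11, X13, X20, X21, X23, X30, X31, X33, D_cst, D_one]; ring1)) hb)
    (by linear_combination (norm := (simp only [D_add, D_sub, D_neg, D_mul, N2, N3, N4, N5, N6, N8, N10, N12, D_zero, H0, H1, H2, H3, D10, D20, D30, D21, D31, D32, Nat.cast_ofNat, Nat.cast_one, X00, X01, X03, X10, X11, X13, X20, X21, X23, X30, X31, X33, D_cst, D_one]; ring1)) h1) (by linear_combination (norm := (simp only [D_add, D_sub, D_neg, D_mul, N2, N3, N4, N5, N6, N8, N10, N12, D_zero, H0, H1, H2, H3, D10, D20, D30, D21, D31, D32, Nat.cast_ofNat, Nat.cast_one, X00, X01, X03, X10, X11, X13, X20, X21, X23, X30, X31, X33, D_cst, D_one]; ring1)) h2) (by linear_combination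 (norm := (simp only [D_add, D_sub, D_neg, D_mul, N2, N3, N4, N5, N6, N8, N10, N12, D_zero, H0, H1, H2, H3, D10, D20, D30, D21, D31, D32, Nat.cast_ofNat, Nat.cast_one, X00, X01, X03, X10, X11, X13, X20, X21, X23, X30, X31, X33, D_cst, D_one]; ring1)) h3)
  exact ⟨a / 2, b / 2, c, by linear_combination hc⟩

theorem integrate  (P Q R S T A B C E F : Sm)
    (e1 : D 1 P = 0)
    (e2 : D 2 P + 2 * D 1 Q = 0)
    (e3 : D 3 P + 2 * D 1 S = 0)
    (e4 : D 1 A + 2 * D 2 Q = 0)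
    (e5 : D 1 B + 2 * D 3 S = 0)
    (e6 : D 1 T + D 2 S + D 3 Q = 0)
    (e7 : D 2 A = 0)
    (e8 : D 3 A + 2 * D 2 T = 0)
    (e9 : D 2 B + 2 * D 3 T = 0)
    (e10 : D 3 B = 0)
    (e11 : D 0 P + 2 * D 1 R = 0)
    (e12 : D 0 Q + D 1 C + D 2 R - 2 * hh * P = 0)
    (e13 : D 0 S + D 1 E + D 3 R = 0)
    (e14 : D 0 A + 2 * D 2 C - 4 * hh * Q = 0)
    (e15 : D 0 T + D 2 E + D 3 C - 2 * hh * S = 0)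
    (e16 : D 0 B + 2 * D 3 E = 0)
    (e17 : D 1 F + 2 * D 0 R - 2 * hh * Q = 0)
    (e18 : D 2 F + 2 * D 0 C - 4 * hh * R - 2 * hh * A = 0)
    (e19 : D 3 F + 2 * D 0 E - 2 * hh * T = 0)
    (e20 : D 0 F - 2 * hh * C = 0) :
    ∃ a b c q0 q1 q2 b0 b1 b2 al r0 r1 r2 t0 t1 f0 : ℝ,
      P = (cst a * cx 0 * cx 0 + 2 * cst b * cx 0 + cst c) ∧
      Q = (2 * cst a * cx 0 + 2 * cst b) ∧
      R = 2 * hh * (cst a * cx 0 * cx 0 + 2 * cst b * cx 0 + cst c) - cx 1 * (cst a * cx 0 + cst b) + (cst r0 + cst r1 * cx 0 + cst r2 * cx 3 - cst q2 * cx 0 * cx 3) ∧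
      S = (cst q2 * cx 0 * cx 0 + 2 * cst q1 * cx 0 + cst q0) ∧
      T = 2 * cst r2 + 4 * cst q1 + 2 * cst q2 * cx 0 ∧
      A = cst al ∧
      B = (cst b2 * cx 0 * cx 0 + 2 * cst b1 * cx 0 + cst b0) ∧
      C = 2 * hh * (2 * cst a * cx 0 + 2 * cst b) - 2 * cst a * cx 1 + 2 * cst r1 - 2 * cst q2 * cx 3 ∧
      E = 2 * hh * (cst q2 * cx 0 * cx 0 + 2 * cst q1 * cx 0 + cst q0) - cx 1 * (cst r2 + 2 * cst q1 + cst q2 * cx 0) - cx 3 * (cst b2 * cx 0 + cst b1) + (cst t0 + cst t1 * cx 0) ∧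
      F = 4 * hh * hh * (cst a * cx 0 * cx 0 + 2 * cst b * cx 0 + cst c) - 2 * hh * cx 1 * (2 * cst a * cx 0 + 2 * cst b) + 4 * hh * (cst r0 + cst r1 * cx 0 + cst r2 * cx 3 - cst q2 * cx 0 * cx 3) + 2 * hh * cst al - 8 * hh * cst a + cst a * cx 1 * cx 1 - 2 * cst r1 * cx 1 + 2 * cst q2 * cx 1 * cx 3 + cst b2 * cx 3 * cx 3 - 2 * cst t1 * cx 3 + cst f0 := by
  obtain ⟨hp2, hp3z, hp000, hqp, hr2, hr00, hs00, hr33, hs1, hs2, hs3, hs000, ha2, ha0, ha1, ha3, hb1, hb2, hb000, htt, hcc, hev, hey, he00⟩ := solve_pde P Q R S T A B C E F e1 e2 e3 e4 e5 e6 e7 e8 e9 e10 e11 e12 e13 e14 e15 e16 e17 e18 e19 e20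
  obtain ⟨a, b, c, hP⟩ := quad P e1 hp2 hp3z hp000
  obtain ⟨q2, q1, q0, hS⟩ := quad S hs1 hs2 hs3 hs000
  obtain ⟨b2, b1, b0, hB⟩ := quad B hb1 hb2 e10 hb000
  obtain ⟨al, hA⟩ := const4 A ha0 ha1 ha2 ha3
  subst hP hS hB hA
  obtain ⟨ρ, hρ⟩ : ∃ ρ, ρ = R - (2 * hh * (cst a * cx 0 * cx 0 + 2 * cst b * cx 0 + cst c) - cx 1 * (cst a * cx 0 + cst b)) + cst q2 * cx 0 * cx 3 := ⟨_, rfl⟩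
  have ρ1 : D 1 ρ = 0 := by
    apply canc 2 0 (by norm_num); rw [hρ]; linear_combination (norm := (simp only [D_add, D_sub, D_neg, D_mul, N2, N3, N4, N5, N6, N8, N10, N12, D_zero, H0, H1, H2, H3, D10, D20, D30, D21, D31, D32, Nat.cast_ofNat, Nat.cast_one, X00, X01, X03, X10, X11, X13, X20, X21, X23, X30, X31, X33, D_cst, D_one]; ring1)) e11
  have ρ2 : D 2 ρ = 0 := by
    rw [hρ]; linear_combination (norm := (simp only [D_add, D_sub, D_neg, D_mul, N2, N3, N4, N5, N6, N8, N10, N12, D_zero, H0, H1, H2, H3, D10, D20, D30, D21, D31, D32, Nat.cast_ofNat, Nat.cast_one, X00, X01, X03, X10, X11, X13, X20, X21, X23, X30, X31, X33, D_cst, D_one]; ring1)) hr2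
  have ρ00 : D 0 (D 0 ρ) = 0 := by
    rw [hρ]; linear_combination (norm := (simp only [D_add, D_sub, D_neg, D_mul, N2, N3, N4, N5, N6, N8, N10, N12, D_zero, H0, H1, H2, H3, D10, D20, D30, D21, D31, D32, Nat.cast_ofNat, Nat.cast_one, X00, X01, X03, X10, X11, X13, X20, X21, X23, X30, X31, X33, D_cst, D_one]; ring1)) hr00
  have ρ03 : D 0 (D 3 ρ) = 0 := by
    apply canc 2 0 (by norm_num); rw [hρ]; linear_combination (norm := (simp only [D_add, D_sub, D_neg, D_mul, N2, N3, N4, N5, N6, N8, N10, N12, D_zero, H0, H1, H2, H3, D10, D20, D30, D21, D31, D32, Nat.cast_ofNat, Nat.cast_one, X00, X01, X03, X10, X11, X13, X20, X21, X23, X30, X31, X33, D_cst, D_one]; ring1)) hs00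
  have ρ33 : D 3 (D 3 ρ) = 0 := by
    rw [hρ]; linear_combination (norm := (simp only [D_add, D_sub, D_neg, D_mul, N2, N3, N4, N5, N6, N8, N10, N12, D_zero, H0, H1, H2, H3, D10, D20, D30, D21, D31, D32, Nat.cast_ofNat, Nat.cast_one, X00, X01, X03, X10, X11, X13, X20, X21, X23, X30, X31, X33, D_cst, D_one]; ring1)) hr33
  obtain ⟨r1, hr1⟩ := const4 (D 0 ρ) ρ00 (by linear_combination (norm := (simp only [D_add, D_sub, D_neg, D_mul, N2, N3, N4, N5, N6, N8, N10, N12, D_zero, H0, H1, H2, H3, D10, D20, D30, D21, D31, D32, Nat.cast_ofNat, Nat.cast_one, X00, X01, X03, X10, X11, X13, X20, X21, X23, X30, X31, X33, D_cst, D_one]; ring1)) dz 0 ρ1)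
    (by linear_combination (norm := (simp only [D_add, D_sub, D_neg, D_mul, N2, N3, N4, N5, N6, N8, N10, N12, D_zero, H0, H1, H2, H3, D10, D20, D30, D21, D31, D32, Nat.cast_ofNat, Nat.cast_one, X00, X01, X03, X10, X11, X13, X20, X21, X23, X30, X31, X33, D_cst, D_one]; ring1)) dz 0 ρ2) (by linear_combination (norm := (simp only [D_add, D_sub, D_neg, D_mul, N2, N3, N4, N5, N6, N8, N10, N12, D_zero, H0, H1, H2, H3, D10, D20, D30, D21, D31, D32, Nat.cast_ofNat, Nat.cast_one, X00, X01, X03, X10, X11, X13, X20, X21, X23, X30, X31, X33, D_cst, D_one]; ring1)) ρ03)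
  obtain ⟨r2, hr2'⟩ := const4 (D 3 ρ) ρ03 (by linear_combination (norm := (simp only [D_add, D_sub, D_neg, D_mul, N2, N3, N4, N5, N6, N8, N10, N12, D_zero, H0, H1, H2, H3, D10, D20, D30, D21, D31, D32, Nat.cast_ofNat, Nat.cast_one, X00, X01, X03, X10, X11, X13, X20, X21, X23, X30, X31, X33, D_cst, D_one]; ring1)) dz 3 ρ1)
    (by linear_combination (norm := (simp only [D_add, D_sub, D_neg, D_mul, N2, N3, N4, N5, N6, N8, N10, N12, D_zero, H0, H1, H2, H3, D10, D20, D30, D21, D31, D32, Nat.cast_ofNat, Nat.cast_one, X00, X01, X03, X10, X11, X13, X20, X21, X23, X30, X31, X33, D_cst, D_one]; ring1)) dz 3 ρ2) ρ33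
  obtain ⟨r0, hr0⟩ := const4 (ρ - cst r1 * cx 0 - cst r2 * cx 3) (by linear_combination (norm := (simp only [D_add, D_sub, D_neg, D_mul, N2, N3, N4, N5, N6, N8, N10, N12, D_zero, H0, H1, H2, H3, D10, D20, D30, D21, D31, D32, Nat.cast_ofNat, Nat.cast_one, X00, X01, X03, X10, X11, X13, X20, X21, X23, X30, X31, X33, D_cst, D_one]; ring1)) hr1)
    (by linear_combination (norm := (simp only [D_add, D_sub, D_neg, D_mul, N2, N3, N4, N5, N6, N8, N10, N12, D_zero, H0, H1, H2, H3, D10, D20, D30, D21, D31, D32, Nat.cast_ofNat, Nat.cast_one, X00, X01, X03, X10, X11, X13, X20, X21, X23, X30, X31, X33, D_cst, D_one]; ring1)) ρ1) (by linear_combination (norm := (simp only [D_add, D_sub, D_neg, D_mul, N2, N3, N4, N5, N6, N8, N10, N12, D_zero, H0, H1, H2, H3, D10, D20, D30, D21, D31, D32, Nat.cast_ofNat, Nat.cast_one, X00, X01, X03, X10, X11, X13, X20, X21, X23, X30, X31, X33, D_cst, D_one]; ring1)) ρ2)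
    (by linear_combination (norm := (simp only [D_add, D_sub, D_neg, D_mul, N2, N3, N4, N5, N6, N8, N10, N12, D_zero, H0, H1, H2, H3, D10, D20, D30, D21, D31, D32, Nat.cast_ofNat, Nat.cast_one, X00, X01, X03, X10, X11, X13, X20, X21, X23, X30, X31, X33, D_cst, D_one]; ring1)) hr2')
  have hR : R = 2 * hh * (cst a * cx 0 * cx 0 + 2 * cst b * cx 0 + cst c) - cx 1 * (cst a * cx 0 + cst b) + (cst r0 + cst r1 * cx 0 + cst r2 * cx 3 - cst q2 * cx 0 * cx 3) := by linear_combination hr0 - hρ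
  clear hρ hr0 hr1 hr2' ρ1 ρ2 ρ00 ρ03 ρ33
  subst hR
  have hT : T = 2 * cst r2 + 4 * cst q1 + 2 * cst q2 * cx 0 := by linear_combination (norm := (simp only [D_add, D_sub, D_neg, D_mul, N2, N3, N4, N5, N6, N8, N10, N12, D_zero, H0, H1, H2, H3, D10, D20, D30, D21, D31, D32, Nat.cast_ofNat, Nat.cast_one, X00, X01, X03, X10, X11, X13, X20, X21, X23, X30, X31, X33, D_cst, D_one]; ring1)) htt
  have hC : C = 2 * hh * (2 * cst a * cx 0 + 2 * cst b) - 2 * cst a * cx 1 + 2 * cst r1 - 2 * cst q2 * cx 3 := by linear_combination (norm := (simp only [D_add, D_sub, D_neg, D_mul, N2, N3, N4, N5, N6, N8, N10, N12, D_zero, H0, H1, H2, H3, D10, D20, D30, D21, D31, D32, Nat.cast_ofNat, Nat.cast_one, X00, X01, X03, X10, X11, X13, X20, X21, X23, X30, X31, X33, D_cst, D_one]; ring1)) hcc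
  have hQ : Q = (2 * cst a * cx 0 + 2 * cst b) := by linear_combination (norm := (simp only [D_add, D_sub, D_neg, D_mul, N2, N3, N4, N5, N6, N8, N10, N12, D_zero, H0, H1, H2, H3, D10, D20, D30, D21, D31, D32, Nat.cast_ofNat, Nat.cast_one, X00, X01, X03, X10, X11, X13, X20, X21, X23, X30, X31, X33, D_cst, D_one]; ring1)) hqp
  subst hT hC hQ
  obtain ⟨t1, t0, ht⟩ := affine (E - (2 * hh * (cst q2 * cx 0 * cx 0 + 2 * cst q1 * cx 0 + cst q0) - cx 1 * (cst r2 + 2 * cst q1 + cst q2 * cx 0) - cx 3 * (cst b2 * cx 0 + cst b1)))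
    (by apply canc 2 0 (by norm_num); linear_combination (norm := (simp only [D_add, D_sub, D_neg, D_mul, N2, N3, N4, N5, N6, N8, N10, N12, D_zero, H0, H1, H2, H3, D10, D20, D30, D21, D31, D32, Nat.cast_ofNat, Nat.cast_one, X00, X01, X03, X10, X11, X13, X20, X21, X23, X30, X31, X33, D_cst, D_one]; ring1)) hev)
    (by linear_combination (norm := (simp only [D_add, D_sub, D_neg, D_mul, N2, N3, N4, N5, N6, N8, N10, N12, D_zero, H0, H1, H2, H3, D10, D20, D30, D21, D31, D32, Nat.cast_ofNat, Nat.cast_one, X00, X01, X03, X10, X11, X13, X20, X21, X23, X30, X31, X33, D_cst, D_one]; ring1)) hey)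
    (by apply canc 2 0 (by norm_num); linear_combination (norm := (simp only [D_add, D_sub, D_neg, D_mul, N2, N3, N4, N5, N6, N8, N10, N12, D_zero, H0, H1, H2, H3, D10, D20, D30, D21, D31, D32, Nat.cast_ofNat, Nat.cast_one, X00, X01, X03, X10, X11, X13, X20, X21, X23, X30, X31, X33, D_cst, D_one]; ring1)) e16)
    (by linear_combination (norm := (simp only [D_add, D_sub, D_neg, D_mul, N2, N3, N4, N5, N6, N8, N10, N12, D_zero, H0, H1, H2, H3, D10, D20, D30, D21, D31, D32, Nat.cast_ofNat, Nat.cast_one, X00, X01, X03, X10, X11, X13, X20, X21, X23, X30, X31, X33, D_cst, D_one]; ring1)) he00)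
  have hE : E = 2 * hh * (cst q2 * cx 0 * cx 0 + 2 * cst q1 * cx 0 + cst q0) - cx 1 * (cst r2 + 2 * cst q1 + cst q2 * cx 0) - cx 3 * (cst b2 * cx 0 + cst b1) + (cst t0 + cst t1 * cx 0) := by linear_combination ht
  subst hE
  obtain ⟨f0, hf⟩ := const4 (F - (4 * hh * hh * (cst a * cx 0 * cx 0 + 2 * cst b * cx 0 + cst c) - 2 * hh * cx 1 * (2 * cst a * cx 0 + 2 * cst b) + 4 * hh * (cst r0 + cst r1 * cx 0 + cst r2 * cx 3 - cst q2 * cx 0 * cx 3) + 2 * hh * cst al - 8 * hh * cst a + cst a * cx 1 * cx 1 - 2 * cst r1 * cx 1 + 2 * cst q2 * cx 1 * cx 3 + cst b2 * cx 3 * cx 3 - 2 * cst t1 * cx 3))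
    (by linear_combination (norm := (simp only [D_add, D_sub, D_neg, D_mul, N2, N3, N4, N5, N6, N8, N10, N12, D_zero, H0, H1, H2, H3, D10, D20, D30, D21, D31, D32, Nat.cast_ofNat, Nat.cast_one, X00, X01, X03, X10, X11, X13, X20, X21, X23, X30, X31, X33, D_cst, D_one]; ring1)) e20) (by linear_combination (norm := (simp only [D_add, D_sub, D_neg, D_mul, N2, N3, N4, N5, N6, N8, N10, N12, D_zero, H0, H1, H2, H3, D10, D20, D30, D21, D31, D32, Nat.cast_ofNat, Nat.cast_one, X00, X01, X03, X10, X11, X13, X20, X21, X23, X30, X31, X33, D_cst, D_one]; ring1)) e17)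
    (by linear_combination (norm := (simp only [D_add, D_sub, D_neg, D_mul, N2, N3, N4, N5, N6, N8, N10, N12, D_zero, H0, H1, H2, H3, D10, D20, D30, D21, D31, D32, Nat.cast_ofNat, Nat.cast_one, X00, X01, X03, X10, X11, X13, X20, X21, X23, X30, X31, X33, D_cst, D_one]; ring1)) e18) (by linear_combination (norm := (simp only [D_add, D_sub, D_neg, D_mul, N2, N3, N4, N5, N6, N8, N10, N12, D_zero, H0, H1, H2, H3, D10, D20, D30, D21, D31, D32, Nat.cast_ofNat, Nat.cast_one, X00, X01, X03, X10, X11, X13, X20, X21, X23, X30, X31, X33, D_cst, D_one]; ring1)) e19)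
  have hF : F = 4 * hh * hh * (cst a * cx 0 * cx 0 + 2 * cst b * cx 0 + cst c) - 2 * hh * cx 1 * (2 * cst a * cx 0 + 2 * cst b) + 4 * hh * (cst r0 + cst r1 * cx 0 + cst r2 * cx 3 - cst q2 * cx 0 * cx 3) + 2 * hh * cst al - 8 * hh * cst a + cst a * cx 1 * cx 1 - 2 * cst r1 * cx 1 + 2 * cst q2 * cx 1 * cx 3 + cst b2 * cx 3 * cx 3 - 2 * cst t1 * cx 3 + cst f0 := by linear_combination hf
  exact ⟨a, b, c, q0, q1, q2, b0, b1, b2, al, r0, r1, r2, t0, t1, f0, rfl, rfl, rfl, rfl, rfl, rfl, rfl, rfl, rfl, hF⟩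

def GS (d a b : Fin 4) : Sm :=
  if (d = 2 ∧ a = 0 ∧ b = 0) ∨ (d = 1 ∧ ((a = 0 ∧ b = 2) ∨ (a = 2 ∧ b = 0))) then hh else 0

theorem Gamma_eq (p : Pt) (d a b : Fin 4) :
    Gamma (fun p => Real.exp (p 2)) p d a b = (GS d a b).1 p := by
  have h0 : pd 0 (fun p => Real.exp (p 2)) p = 0 := congrFun (congrArg Subtype.val H0) p
  have h2 : pd 2 (fun p => Real.exp (p 2)) p = hh.1 p := congrFun (congrArg Subtype.val H2) p
  have h3 : pd 3 (fun p => Real.exp (p 2)) p = 0 := congrFun (congrArg Subtype.val H3) p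
  unfold Gamma GS
  rw [h0, h2, h3]
  split_ifs <;> first | rfl | (exfalso; simp_all)

theorem covD1_eq (X : Fin 4 → Sm) (p : Pt) (a b : Fin 4) :
    covD1 (fun p => Real.exp (p 2)) (fun p a => (X a).1 p) p a b =
      (D a (X b) - (GS 0 a b * X 0 + GS 1 a b * X 1 + GS 2 a b * X 2 + GS 3 a b * X 3)).1 p := by
  unfold covD1
  rw [Fin.sum_univ_four]
  simp only [Gamma_eq]
  rfl

theorem covD2_eq (K : Fin 4 → Fin 4 → Sm) (p : Pt) (c a b : Fin 4) :
    covD2 (fun p => Real.exp (p 2)) (fun p a b => (K a b).1 p) p c a b =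
      (D c (K a b) - (GS 0 c a * K 0 b + GS 1 c a * K 1 b + GS 2 c a * K 2 b + GS 3 c a * K 3 b)
        - (GS 0 c b * K a 0 + GS 1 c b * K a 1 + GS 2 c b * K a 2 + GS 3 c b * K a 3)).1 p := by
  unfold covD2
  rw [Fin.sum_univ_four, Fin.sum_univ_four]
  simp only [Gamma_eq]
  rfl

theorem killing_of_s5 (X : Fin 4 → Sm)
    (h : ∀ a b, D a (X b) + D b (X a) =
      (GS 0 a b * X 0 + GS 1 a b * X 1 + GS 2 a b * X 2 + GS 3 a b * X 3) +
      (GS 0 b a * X 0 + GS 1 b a * X 1 + GS 2 b a * X 2 + GS 3 b a * X 3)) :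
    IsKillingVector (fun p => Real.exp (p 2)) Set.univ (fun p a => (X a).1 p) := by
  refine ⟨fun a => (Sm.smooth (X a)).contDiffOn, fun p _ a b => ?_⟩
  rw [covD1_eq, covD1_eq]
  have : ∀ f g : Sm, f + g = 0 → f.1 p + g.1 p = 0 := fun f g hfg =>
    congrFun (congrArg Subtype.val hfg) p
  apply this
  linear_combination h a b

def XU : Fin 4 → Sm := ![-(2 * hh), -1, 0, 0]
def XW : Fin 4 → Sm := ![-1, 0, 0, 0]
def XZ : Fin 4 → Sm := ![0, 0, 0, 1]
def XD : Fin 4 → Sm := ![2 * hh * cx 0 - cx 1, cx 0, 2, 0]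
def XN : Fin 4 → Sm := ![-cx 3, 0, 0, cx 0]

theorem XU_killing : IsKillingVector (fun p => Real.exp (p 2)) Set.univ (fun p a => (XU a).1 p) := by
  apply killing_of_s5
  intro a b
  fin_cases a <;> fin_cases b <;>
    simp [XU, GS, D_add, D_sub, D_neg, D_mul, N2, D_zero, D_one, D_cx, D_hh] <;> ring
theorem XW_killing : IsKillingVector (fun p => Real.exp (p 2)) Set.univ (fun p a => (XW a).1 p) := by
  apply killing_of_s5
  intro a b
  fin_cases a <;> fin_cases b <;>
    simp [XW, GS, D_add, D_sub, D_neg, D_mul, N2, D_zero, D_one, D_cx, D_hh]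
theorem XZ_killing : IsKillingVector (fun p => Real.exp (p 2)) Set.univ (fun p a => (XZ a).1 p) := by
  apply killing_of_s5
  intro a b
  fin_cases a <;> fin_cases b <;>
    simp [XZ, GS, D_add, D_sub, D_neg, D_mul, N2, D_zero, D_one, D_cx, D_hh]
theorem XD_killing : IsKillingVector (fun p => Real.exp (p 2)) Set.univ (fun p a => (XD a).1 p) := by
  apply killing_of_s5
  intro a b
  fin_cases a <;> fin_cases b <;>
    simp [XD, GS, D_add, D_sub, D_neg, D_mul, N2, D_zero, D_one, D_cx, D_hh] <;> ring
theorem XN_killing : IsKillingVector (fun p => Real.exp (p 2)) Set.univ (fun p a => (XN a).1 p) := by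
  apply killing_of_s5
  intro a b
  fin_cases a <;> fin_cases b <;>
    simp [XN, GS, D_add, D_sub, D_neg, D_mul, N2, D_zero, D_one, D_cx, D_hh]

def sp (X Y : Fin 4 → Sm) (p : Pt) (a b : Fin 4) : ℝ :=
  ((X a).1 p * (Y b).1 p + (X b).1 p * (Y a).1 p) / 2

theorem hh_val (p : Pt) : hh.1 p = Real.exp (p 2) := rfl
theorem cx_val (i : Fin 4) (p : Pt) : (cx i).1 p = p i := rfl
theorem cst_val (r : ℝ) (p : Pt) : (cst r).1 p = r := rfl

/-- For the pp-wave metric with `H = exp(y)` on `ℝ⁴`, every Killing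
tensor is reducible; the spacetime admits no irreducible Killing tensors. -/
theorem stmt5 :
    let H : Pt → ℝ := fun p => Real.exp (p 2)
    ∀ K, IsKillingTensor H Set.univ K → IsReducible H Set.univ K := by
  intro H K hK
  obtain ⟨hsm, hsym, hk⟩ := hK
  obtain ⟨k, hkK⟩ : ∃ k : Fin 4 → Fin 4 → Sm, K = fun p a b => (k a b).1 p :=
    ⟨fun a b => ⟨fun p => K p a b, mem_Sm.2 (contDiffOn_univ.1 (hsm a b))⟩, rfl⟩
  have ks : ∀ a b, k a b = k b a := fun a b => Subtype.ext (funext fun p => by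
    have := hsym p a b
    rwa [hkK] at this)
  have eq : ∀ a b c,
      (D c (k a b) - (GS 0 c a * k 0 b + GS 1 c a * k 1 b + GS 2 c a * k 2 b + GS 3 c a * k 3 b)
        - (GS 0 c b * k a 0 + GS 1 c b * k a 1 + GS 2 c b * k a 2 + GS 3 c b * k a 3)) +
      (D a (k b c) - (GS 0 a b * k 0 c + GS 1 a b * k 1 c + GS 2 a b * k 2 c + GS 3 a b * k 3 c)
        - (GS 0 a c * k b 0 + GS 1 a c * k b 1 + GS 2 a c * k b 2 + GS 3 a c * k b 3)) +
      (D b (k c a) - (GS 0 b c * k 0 a + GS 1 b c * k 1 a + GS 2 b c * k 2 a + GS 3 b c * k 3 a)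
        - (GS 0 b a * k c 0 + GS 1 b a * k c 1 + GS 2 b a * k c 2 + GS 3 b a * k c 3)) = 0 := by
    intro a b c
    apply Subtype.ext; funext p
    have := hk p (Set.mem_univ p) a b c
    rw [hkK, covD2_eq, covD2_eq, covD2_eq] at this
    exact this
  have s10 := ks 1 0
  have s20 := ks 2 0
  have s30 := ks 3 0
  have s21 := ks 2 1
  have s31 := ks 3 1
  have s32 := ks 3 2
  have cc3 : ∀ x : Sm, 3 * x = 0 → x = 0 := fun x h => three_cancel h
  have g : ∀ d a b, GS d a b =
    if (d = 2 ∧ a = 0 ∧ b = 0) ∨ (d = 1 ∧ ((a = 0 ∧ b = 2) ∨ (a = 2 ∧ b = 0))) then hh else 0 :=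
    fun _ _ _ => rfl
  obtain ⟨a, b, c, q0, q1, q2, b0, b1, b2, al, r0, r1, r2, t0, t1, f0,
    hP, hQ, hR, hS, hT, hA, hB, hC, hE, hF⟩ :=
    integrate (k 1 1) (k 1 2) (k 0 1) (k 1 3) (k 2 3) (k 2 2) (k 3 3) (k 0 2) (k 0 3) (k 0 0)
      (by apply cc3; have h := eq 1 1 1
          simp [g, s10, s20, s30, s21, s31, s32] at h; linear_combination h)
      (by have h := eq 1 1 2
          simp [g, s10, s20, s30, s21, s31, s32] at h; linear_combination h)
      (by have h := eq 1 1 3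
          simp [g, s10, s20, s30, s21, s31, s32] at h; linear_combination h)
      (by have h := eq 1 2 2
          simp [g, s10, s20, s30, s21, s31, s32] at h; linear_combination h)
      (by have h := eq 1 3 3
          simp [g, s10, s20, s30, s21, s31, s32] at h; linear_combination h)
      (by have h := eq 1 2 3
          simp [g, s10, s20, s30, s21, s31, s32] at h; linear_combination h)
      (by apply cc3; have h := eq 2 2 2
          simp [g, s10, s20, s30, s21, s31, s32] at h; linear_combination h)
      (by have h := eq 2 2 3
          simp [g, s10, s20, s30, s21, s31, s32] at h; linear_combination h)
      (by have h := eq 2 3 3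
          simp [g, s10, s20, s30, s21, s31, s32] at h; linear_combination h)
      (by apply cc3; have h := eq 3 3 3
          simp [g, s10, s20, s30, s21, s31, s32] at h; linear_combination h)
      (by have h := eq 0 1 1
          simp [g, s10, s20, s30, s21, s31, s32] at h; linear_combination h)
      (by have h := eq 0 1 2
          simp [g, s10, s20, s30, s21, s31, s32] at h; linear_combination h)
      (by have h := eq 0 1 3
          simp [g, s10, s20, s30, s21, s31, s32] at h; linear_combination h)
      (by have h := eq 0 2 2
          simp [g, s10, s20, s30, s21, s31, s32] at h; linear_combination h)
      (by have h := eq 0 2 3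
          simp [g, s10, s20, s30, s21, s31, s32] at h; linear_combination h)
      (by have h := eq 0 3 3
          simp [g, s10, s20, s30, s21, s31, s32] at h; linear_combination h)
      (by have h := eq 0 0 1
          simp [g, s10, s20, s30, s21, s31, s32] at h; linear_combination h)
      (by have h := eq 0 0 2
          simp [g, s10, s20, s30, s21, s31, s32] at h; linear_combination h)
      (by have h := eq 0 0 3
          simp [g, s10, s20, s30, s21, s31, s32] at h; linear_combination h)
      (by apply cc3; have h := eq 0 0 0
          simp [g, s10, s20, s30, s21, s31, s32] at h; linear_combination h)
  refine ⟨al - 4 * a, 15,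
    ![c, -(2 * b), a, b0 - (al - 4 * a), 2 * b1, b2, -(2 * q0), 2 * r2, 2 * r2 + 4 * q1, 2 * q2,
      2 * (r0 + (al - 4 * a)), -(2 * r1), -(2 * t0), -(2 * t1), f0],
    fun i p j => ((![XU, XU, XD, XZ, XZ, XN, XU, XU, XD, XD, XU, XD, XW, XW, XW] : Fin 15 → _) i j).1 p,
    fun i p j => ((![XU, XD, XD, XZ, XN, XN, XZ, XN, XZ, XN, XW, XW, XZ, XN, XW] : Fin 15 → _) i j).1 p,
    ?_, ?_, ?_⟩
  · intro i
    fin_cases i <;>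
      first | exact XU_killing | exact XD_killing | exact XZ_killing | exact XN_killing | exact XW_killing
  · intro i
    fin_cases i <;>
      first | exact XU_killing | exact XD_killing | exact XZ_killing | exact XN_killing | exact XW_killing
  · intro p _
    have sym : ∀ i j, K p i j = (k i j).1 p := by intro i j; rw [hkK]
    have vals : ∀ i j, i ≤ j → K p i j = (al - 4 * a) * ppMetric H p i j +
        (c * sp XU XU p i j + -(2 * b) * sp XU XD p i j + a * sp XD XD p i j
        + (b0 - (al - 4 * a)) * sp XZ XZ p i j + 2 * b1 * sp XZ XN p i j + b2 * sp XN XN p i j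
        + -(2 * q0) * sp XU XZ p i j + 2 * r2 * sp XU XN p i j + (2 * r2 + 4 * q1) * sp XD XZ p i j
        + 2 * q2 * sp XD XN p i j + 2 * (r0 + (al - 4 * a)) * sp XU XW p i j
        + -(2 * r1) * sp XD XW p i j + -(2 * t0) * sp XW XZ p i j + -(2 * t1) * sp XW XN p i j
        + f0 * sp XW XW p i j) := by
      have va : ∀ (f g : Sm), (f + g).1 p = f.1 p + g.1 p := fun _ _ => rfl
      have vs : ∀ (f g : Sm), (f - g).1 p = f.1 p - g.1 p := fun _ _ => rfl
      have vm : ∀ (f g : Sm), (f * g).1 p = f.1 p * g.1 p := fun _ _ => rfl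
      have vn : ∀ (f : Sm), (-f).1 p = -f.1 p := fun _ => rfl
      have vp : ∀ (f : Sm) (n : ℕ), (f ^ n).1 p = f.1 p ^ n := fun f n => by
        induction n with
        | zero => simp
        | succ n ih => rw [pow_succ, vm, ih, pow_succ]
      have v0 : (0 : Sm).1 p = 0 := rfl
      have v1 : (1 : Sm).1 p = 1 := rfl
      have v2 : (2 : Sm).1 p = 2 := rfl
      have v4 : (4 : Sm).1 p = 4 := rfl
      have v8 : (8 : Sm).1 p = 8 := rfl
      have u0 : XU 0 = -(2 * hh) := rfl
      have u1 : XU 1 = -1 := rfl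
      have u2 : XU 2 = 0 := rfl
      have u3 : XU 3 = 0 := rfl
      have w0 : XW 0 = -1 := rfl
      have w1 : XW 1 = 0 := rfl
      have w2 : XW 2 = 0 := rfl
      have w3 : XW 3 = 0 := rfl
      have z0 : XZ 0 = 0 := rfl
      have z1 : XZ 1 = 0 := rfl
      have z2 : XZ 2 = 0 := rfl
      have z3 : XZ 3 = 1 := rfl
      have d0 : XD 0 = 2 * hh * cx 0 - cx 1 := rfl
      have d1 : XD 1 = cx 0 := rfl
      have d2 : XD 2 = 2 := rfl
      have d3 : XD 3 = 0 := rfl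
      have n0 : XN 0 = -cx 3 := rfl
      have n1 : XN 1 = 0 := rfl
      have n2 : XN 2 = 0 := rfl
      have n3 : XN 3 = cx 0 := rfl
      have G00 : ppMetric H p 0 0 = -2 * Real.exp (p 2) := by simp [ppMetric, H]
      have G01 : ppMetric H p 0 1 = -1 := by simp [ppMetric]
      have G02 : ppMetric H p 0 2 = 0 := by simp [ppMetric]
      have G03 : ppMetric H p 0 3 = 0 := by simp [ppMetric]
      have G11 : ppMetric H p 1 1 = 0 := by simp [ppMetric]
      have G12 : ppMetric H p 1 2 = 0 := by simp [ppMetric]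
      have G13 : ppMetric H p 1 3 = 0 := by simp [ppMetric]
      have G22 : ppMetric H p 2 2 = 1 := by simp [ppMetric]
      have G23 : ppMetric H p 2 3 = 0 := by simp [ppMetric]
      have G33 : ppMetric H p 3 3 = 1 := by simp [ppMetric]
      intro i j hij
      rw [sym]
      have hi : i = 0 ∨ i = 1 ∨ i = 2 ∨ i = 3 := by clear hij; revert i; decide
      have hj : j = 0 ∨ j = 1 ∨ j = 2 ∨ j = 3 := by clear hij; revert j; decide
      rcases hi with rfl | rfl | rfl | rfl <;> rcases hj with rfl | rfl | rfl | rfl <;>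
        first
        | (exfalso; revert hij; decide)
        | (simp only [hP, hQ, hR, hS, hT, hA, hB, hC, hE, hF, sp, va, vs, vm, vn, vp, v0, v1, v2,
            v4, v8, u0, u1, u2, u3, w0, w1, w2, w3, z0, z1, z2, z3, d0, d1, d2, d3, n0, n1, n2, n3,
            hh_val, cx_val, cst_val, G00, G01, G02, G03, G11, G12, G13, G22, G23, G33]
           ring)
    have ssp : ∀ X Y i j, sp X Y p i j = sp X Y p j i := fun X Y i j => by unfold sp; ring
    have sg : ∀ i j, ppMetric H p i j = ppMetric H p j i := by
      intro i j; fin_cases i <;> fin_cases j <;> rfl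
    intro i j
    have fin : K p i j = (al - 4 * a) * ppMetric H p i j +
        (c * sp XU XU p i j + -(2 * b) * sp XU XD p i j + a * sp XD XD p i j
        + (b0 - (al - 4 * a)) * sp XZ XZ p i j + 2 * b1 * sp XZ XN p i j + b2 * sp XN XN p i j
        + -(2 * q0) * sp XU XZ p i j + 2 * r2 * sp XU XN p i j + (2 * r2 + 4 * q1) * sp XD XZ p i j
        + 2 * q2 * sp XD XN p i j + 2 * (r0 + (al - 4 * a)) * sp XU XW p i j
        + -(2 * r1) * sp XD XW p i j + -(2 * t0) * sp XW XZ p i j + -(2 * t1) * sp XW XN p i j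
        + f0 * sp XW XW p i j) := by
      rcases le_total i j with h | h
      · exact vals i j h
      · have := vals j i h
        rw [hsym p j i, sg j i] at this
        simp only [ssp _ _ j i] at this
        exact this
    rw [fin]
    congr 1
    simp only [Fin.sum_univ_succ, Fin.sum_univ_zero, ← add_assoc, add_zero]
    rfl

end
end
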